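/- arXiv:1405.5606 — 3 statements merged into one kernel-verified Lean document; each statement's English description precedes it below -/
import Mathlib

section
/- For every k ≥ 2, the (non-context-free) language L = { a_1^n a_2^n ⋯ a_{k+1}^n | n ≥ 1 } over the alphabet {a_1,…,a_{k+1}} belongs both to L(CD_2, CF−λ, (t∧≥k)) and to L(CD_2, CF−λ, (t∧=k)), i.e., it is generated by a CD grammar system with two λ-free context-free components working in the (t∧≥k)-mode, and also by one working in the (t∧=k)-mode. -/
namespace CDHybrid

/-- Symbols: nonterminals are natural numbers, terminals come from `T`. -/
abbrev Symb (T : Type) := ℕ ⊕ T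

/-- Sentential forms. -/
abbrev SForm (T : Type) := List (Symb T)

/-- A context-free rule `A → z`. -/
abbrev Rule (T : Type) := ℕ × SForm T

/-- Number of nonterminal occurrences in a sentential form. -/
def ntCount {T : Type} (x : SForm T) : ℕ := (x.filter Sum.isLeft).length

/-- One rewriting step using some rule of the rule set `P`. -/
def RStep {T : Type} (P : List (Rule T)) (x y : SForm T) : Prop :=
  ∃ r ∈ P, ∃ u v : SForm T, x = u ++ Sum.inl r.1 :: v ∧ y = u ++ r.2 ++ v

/-- `m`-step derivation using only rules of `P`. -/
def StepsN {T : Type} (P : List (Rule T)) : ℕ → SForm T → SForm T → Prop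
  | 0, x, y => x = y
  | m + 1, x, y => ∃ z, RStep P x z ∧ StepsN P m z y

/-- `m`-step derivation using only rules of `P`, all intermediate (and the final)
sentential forms having at most `b` occurrences of nonterminals. -/
def StepsNB {T : Type} (P : List (Rule T)) (b : ℕ) : ℕ → SForm T → SForm T → Prop
  | 0, x, y => x = y
  | m + 1, x, y => ∃ z, RStep P x z ∧ ntCount z ≤ b ∧ StepsNB P b m z y

/-- Derivation modes of CD grammar systems. -/
inductive Mode where
  | eq : ℕ → Mode
  | le : ℕ → Mode
  | ge : ℕ → Mode
  | star : Mode
  | t : Mode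
  | conj : Mode → Mode → Mode

/-- The predicate of a derivation mode: `modeOK P f m y` holds if an `m`-step
derivation by the component `P` ending in `y` is acceptable for mode `f`. -/
def modeOK {T : Type} (P : List (Rule T)) : Mode → ℕ → SForm T → Prop
  | .eq k, m, _ => m = k
  | .le k, m, _ => m ≤ k
  | .ge k, m, _ => k ≤ m
  | .star, _, _ => True
  | .t, _, y => ¬ ∃ z, RStep P y z
  | .conj f g, m, y => modeOK P f m y ∧ modeOK P g m y

/-- A CD grammar system with context-free components. -/
structure CDGS (T : Type) where
  deg : ℕ
  start : ℕ
  comp : Fin deg → List (Rule T)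

/-- λ-freeness: no erasing rules. -/
def CDGS.LamFree {T : Type} (G : CDGS T) : Prop :=
  ∀ i : Fin G.deg, ∀ r ∈ G.comp i, r.2 ≠ []

/-- One derivation step of a component of `G` in mode `f`. -/
def CDGS.ModeStep {T : Type} (G : CDGS T) (f : Mode) (x y : SForm T) : Prop :=
  ∃ i : Fin G.deg, ∃ m : ℕ, StepsN (G.comp i) m x y ∧ modeOK (G.comp i) f m y

/-- One derivation step of a component of `G` in mode `f`, with all produced
sentential forms having at most `b` nonterminal occurrences. -/
def CDGS.ModeStepB {T : Type} (G : CDGS T) (f : Mode) (b : ℕ) (x y : SForm T) : Prop :=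
  ∃ i : Fin G.deg, ∃ m : ℕ, StepsNB (G.comp i) b m x y ∧ modeOK (G.comp i) f m y

/-- The language generated by `G` in mode `f`. -/
def CDGS.lang {T : Type} (G : CDGS T) (f : Mode) : Set (List T) :=
  { w | Relation.TransGen (G.ModeStep f) [Sum.inl G.start] (w.map Sum.inr) }

/-- The words of the language of `G` in mode `f` possessing a derivation of index
at most `b`, i.e., all sentential forms occurring in it have at most `b`
nonterminal occurrences. -/
def CDGS.langB {T : Type} (G : CDGS T) (f : Mode) (b : ℕ) : Set (List T) :=
  { w | ntCount ([Sum.inl G.start] : SForm T) ≤ b ∧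
      Relation.TransGen (G.ModeStepB f b) [Sum.inl G.start] (w.map Sum.inr) }

/-- Two languages are considered equal iff they differ at most in the empty word. -/
def EqL {T : Type} (L₁ L₂ : Set (List T)) : Prop := L₁ \ {[]} = L₂ \ {[]}

/-- The family `L(CD_n, CF[−λ], f)`; `lf = true` forbids erasing rules. -/
def CDFam (T : Type) (lf : Bool) (n : ℕ) (f : Mode) : Set (Set (List T)) :=
  { L | ∃ G : CDGS T, G.deg ≤ n ∧ (lf = true → G.LamFree) ∧ EqL (G.lang f) L }

/-- The family `L(CD_∞, CF[−λ], f)`. -/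
def CDFamInf (T : Type) (lf : Bool) (f : Mode) : Set (Set (List T)) :=
  { L | ∃ G : CDGS T, (lf = true → G.LamFree) ∧ EqL (G.lang f) L }

/-- The family `L_m(CD_n, CF[−λ], f)` of such languages of index at most `m`. -/
def CDFamInd (T : Type) (lf : Bool) (n : ℕ) (f : Mode) (m : ℕ) : Set (Set (List T)) :=
  { L | ∃ G : CDGS T, G.deg ≤ n ∧ (lf = true → G.LamFree) ∧ EqL (G.lang f) L ∧
      G.lang f ⊆ G.langB f m }

/-- The family `L_m(CD_∞, CF[−λ], f)`. -/
def CDFamIndInf (T : Type) (lf : Bool) (f : Mode) (m : ℕ) : Set (Set (List T)) :=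
  { L | ∃ G : CDGS T, (lf = true → G.LamFree) ∧ EqL (G.lang f) L ∧ G.lang f ⊆ G.langB f m }

/-- The family `L_fin(CD_∞, CF[−λ], f)`. -/
def CDFamFinInf (T : Type) (lf : Bool) (f : Mode) : Set (Set (List T)) :=
  { L | ∃ m : ℕ, 1 ≤ m ∧ L ∈ CDFamIndInf T lf f m }

/-- A context-free grammar. -/
structure CFG (T : Type) where
  start : ℕ
  rules : List (Rule T)

/-- The language generated by a context-free grammar. -/
def CFG.lang {T : Type} (G : CFG T) : Set (List T) :=
  { w | Relation.ReflTransGen (RStep G.rules) [Sum.inl G.start] (w.map Sum.inr) }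

/-- The words of `G.lang` having a derivation of index at most `m`. -/
def CFG.langB {T : Type} (G : CFG T) (m : ℕ) : Set (List T) :=
  { w | ntCount ([Sum.inl G.start] : SForm T) ≤ m ∧
      Relation.ReflTransGen (fun x y => RStep G.rules x y ∧ ntCount y ≤ m)
        [Sum.inl G.start] (w.map Sum.inr) }

/-- The family `L(CF)` of context-free languages. -/
def CFFam (T : Type) : Set (Set (List T)) := { L | ∃ G : CFG T, EqL G.lang L }

/-- The family `L_m(CF)` of context-free languages of index at most `m`. -/
def CFFamInd (T : Type) (m : ℕ) : Set (Set (List T)) :=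
  { L | ∃ G : CFG T, EqL G.lang L ∧ G.lang ⊆ G.langB m }

/-- The family `L_fin(CF)` of context-free languages of finite index. -/
def CFFamFin (T : Type) : Set (Set (List T)) :=
  { L | ∃ m : ℕ, 1 ≤ m ∧ L ∈ CFFamInd T m }

/-- A grammar is linear if every right-hand side contains at most one nonterminal. -/
def CFG.Linear {T : Type} (G : CFG T) : Prop := ∀ r ∈ G.rules, ntCount r.2 ≤ 1

/-- The family `L(LIN)` of linear context-free languages. -/
def LinFam (T : Type) : Set (Set (List T)) :=
  { L | ∃ G : CFG T, G.Linear ∧ EqL G.lang L }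

/-- The family `L(FIN)` of finite languages. -/
def FinFam (T : Type) : Set (Set (List T)) := { L | L.Finite }

/-- A programmed grammar with context-free rules. -/
structure PG (T : Type) where
  start : ℕ
  nLab : ℕ
  rule : Fin nLab → Rule T
  succ : Fin nLab → Set (Fin nLab)
  fail : Fin nLab → Set (Fin nLab)

def PG.LamFree {T : Type} (G : PG T) : Prop := ∀ r : Fin G.nLab, (G.rule r).2 ≠ []

/-- No appearance checking: all failure fields are empty. -/
def PG.NoAC {T : Type} (G : PG T) : Prop := ∀ r : Fin G.nLab, G.fail r = ∅

/-- One step of a programmed grammar on pairs (sentential form, label). -/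
def PG.PStep {T : Type} (G : PG T) (p q : SForm T × Fin G.nLab) : Prop :=
  (∃ u v : SForm T, p.1 = u ++ Sum.inl (G.rule p.2).1 :: v ∧
      q.1 = u ++ (G.rule p.2).2 ++ v ∧ q.2 ∈ G.succ p.2) ∨
  (Sum.inl (G.rule p.2).1 ∉ p.1 ∧ q.1 = p.1 ∧ q.2 ∈ G.fail p.2)

/-- The language generated by a programmed grammar. -/
def PG.lang {T : Type} (G : PG T) : Set (List T) :=
  { w | ∃ r₁ r₂ : Fin G.nLab,
      Relation.ReflTransGen G.PStep ([Sum.inl G.start], r₁) (w.map Sum.inr, r₂) }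

/-- The words of `G.lang` having a derivation of index at most `m`. -/
def PG.langB {T : Type} (G : PG T) (m : ℕ) : Set (List T) :=
  { w | ∃ r₁ r₂ : Fin G.nLab, ntCount ([Sum.inl G.start] : SForm T) ≤ m ∧
      Relation.ReflTransGen (fun p q => G.PStep p q ∧ ntCount q.1 ≤ m)
        ([Sum.inl G.start], r₁) (w.map Sum.inr, r₂) }

/-- The family `L_m(P, CF[−λ][, ac])`: programmed languages of index at most `m`;
`ac = false` forbids appearance checking, `lf = true` forbids erasing rules. -/
def PFamInd (T : Type) (lf ac : Bool) (m : ℕ) : Set (Set (List T)) :=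
  { L | ∃ G : PG T, (lf = true → G.LamFree) ∧ (ac = false → G.NoAC) ∧
      EqL G.lang L ∧ G.lang ⊆ G.langB m }

/-- The family `L_fin(P, CF[−λ][, ac])` of programmed languages of finite index. -/
def PFamFin (T : Type) (lf ac : Bool) : Set (Set (List T)) :=
  { L | ∃ m : ℕ, 1 ≤ m ∧ L ∈ PFamInd T lf ac m }


/-- The word a_1^n a_2^n ⋯ a_{k+1}^n, where a_j is encoded as the letter j-1 ∈ ℕ. -/
def blockWord (k n : ℕ) : List ℕ :=
  (List.range (k + 1)).flatMap (fun j => List.replicate n j)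

/-- The language { a_1^n a_2^n ⋯ a_{k+1}^n | n ≥ 1 }. -/
def blockLang (k : ℕ) : Set (List ℕ) := { w | ∃ n : ℕ, 1 ≤ n ∧ w = blockWord k n }

/-! A word of an infinite context-free language turns into another word of the language by replacing
a factor of bounded length. In the block language, such a replacement changes the common exponent,
so the factor has to reach from the first letter to the last one and to contain all letters between.

The grammar system derives concatenations of `k` blocks with at most one nonterminal each, and
neither component can rewrite the same block twice. Hence at least `k` steps of a component rewrite
all blocks simultaneously, while `k` steps suffice for doing so and leave nothing to rewrite. -/

/-! ### Rewriting and concatenation -/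

section Rewriting

variable {T : Type} {P : List (Rule T)}

theorem RStep.append_right {α β : SForm T} (h : RStep P α β) (γ : SForm T) :
    RStep P (α ++ γ) (β ++ γ) := by
  obtain ⟨r, hr, u, v, rfl, rfl⟩ := h
  exact ⟨r, hr, u, v ++ γ, by simp, by simp⟩

theorem RStep.append_left {α β : SForm T} (γ : SForm T) (h : RStep P α β) :
    RStep P (γ ++ α) (γ ++ β) := by
  obtain ⟨r, hr, u, v, rfl, rfl⟩ := h
  exact ⟨r, hr, γ ++ u, v, by simp, by simp⟩

theorem rStep_append_iff {α β γ : SForm T} :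
    RStep P (α ++ β) γ ↔
      (∃ α', RStep P α α' ∧ γ = α' ++ β) ∨ ∃ β', RStep P β β' ∧ γ = α ++ β' := by
  constructor
  · rintro ⟨r, hr, u, v, h, rfl⟩
    rcases List.append_eq_append_iff.1 h with ⟨u', rfl, rfl⟩ | ⟨v', rfl, h'⟩
    · exact .inr ⟨u' ++ r.2 ++ v, ⟨r, hr, u', v, rfl, rfl⟩, by simp⟩
    · rcases List.cons_eq_append_iff.1 h' with ⟨rfl, rfl⟩ | ⟨v'', rfl, rfl⟩
      · exact .inr ⟨r.2 ++ v, ⟨r, hr, [], v, rfl, rfl⟩, by simp⟩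
      · exact .inl ⟨u ++ r.2 ++ v'', ⟨r, hr, u, v'', rfl, rfl⟩, by simp⟩
  · rintro (⟨α', h, rfl⟩ | ⟨β', h, rfl⟩)
    · exact h.append_right β
    · exact h.append_left α

theorem not_rStep_terminal (w : List T) (γ : SForm T) : ¬ RStep P (w.map Sum.inr) γ := by
  rintro ⟨r, -, u, v, h, -⟩
  have hmem : (Sum.inl r.1 : Symb T) ∈ w.map Sum.inr := by simp [h]
  simp at hmem

theorem rStep_nonterminal_iff {A : ℕ} {γ : SForm T} : RStep P [Sum.inl A] γ ↔ (A, γ) ∈ P := by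
  constructor
  · rintro ⟨⟨B, z⟩, hr, u, v, h, rfl⟩
    obtain ⟨rfl, h⟩ | ⟨_, -, h⟩ := List.cons_eq_append_iff.1 h
    · obtain ⟨rfl, rfl⟩ : B = A ∧ v = [] := by simpa [eq_comm] using h
      simpa using hr
    · simp at h
  · exact fun h => ⟨(A, γ), h, [], [], rfl, by simp⟩

theorem rStep_terminal_append_iff {w : List T} {α γ : SForm T} :
    RStep P (w.map Sum.inr ++ α) γ ↔ ∃ β, RStep P α β ∧ γ = w.map Sum.inr ++ β := by
  simp [rStep_append_iff, not_rStep_terminal]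

theorem rStep_append_terminal_iff {w : List T} {α γ : SForm T} :
    RStep P (α ++ w.map Sum.inr) γ ↔ ∃ β, RStep P α β ∧ γ = β ++ w.map Sum.inr := by
  simp [rStep_append_iff, not_rStep_terminal]

end Rewriting

/-! ### Context-free languages: replacing a short factor -/

section ContextFree

variable {T : Type} {P : List (Rule T)}

/-- The terminal words derivable from the sentential form `α` by the rules `P`, as a
`Language`, so that concatenation of sentential forms corresponds to the product. -/
def wordsFrom (P : List (Rule T)) (α : SForm T) : Language T :=
  { w | Relation.ReflTransGen (RStep P) α (w.map Sum.inr) }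

theorem RStep.mem_wordsFrom {α β : SForm T} {w : List T} (h : RStep P α β)
    (hw : w ∈ wordsFrom P β) : w ∈ wordsFrom P α :=
  Relation.ReflTransGen.head h hw

theorem wordsFrom_append (α β : SForm T) :
    wordsFrom P (α ++ β) = wordsFrom P α * wordsFrom P β := by
  ext w
  rw [Language.mem_mul]
  constructor
  · intro h
    change Relation.ReflTransGen (RStep P) (α ++ β) (w.map Sum.inr) at h
    generalize hγ : α ++ β = γ at h
    induction h using Relation.ReflTransGen.head_induction_on generalizing α β with
    | refl =>
      obtain ⟨x, y, rfl, rfl, rfl⟩ := List.map_eq_append_iff.1 hγ.symm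
      exact ⟨x, .refl, y, .refl, rfl⟩
    | head hstep _ ih =>
      subst hγ
      rcases rStep_append_iff.1 hstep with ⟨α', hα, rfl⟩ | ⟨β', hβ, rfl⟩
      · obtain ⟨x, hx, y, hy, rfl⟩ := ih α' β rfl
        exact ⟨x, hα.mem_wordsFrom hx, y, hy, rfl⟩
      · obtain ⟨x, hx, y, hy, rfl⟩ := ih α β' rfl
        exact ⟨x, hx, y, hβ.mem_wordsFrom hy, rfl⟩
  · rintro ⟨x, hx, y, hy, rfl⟩
    have hleft : Relation.ReflTransGen (RStep P) (α ++ β) (x.map Sum.inr ++ β) :=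
      Relation.ReflTransGen.lift (· ++ β) (fun _ _ h => h.append_right β) α _ hx
    have hright : Relation.ReflTransGen (RStep P) (x.map Sum.inr ++ β)
        (x.map Sum.inr ++ y.map Sum.inr) :=
      Relation.ReflTransGen.lift (x.map Sum.inr ++ ·) (fun _ _ h => h.append_left _) β _ hy
    change Relation.ReflTransGen (RStep P) (α ++ β) ((x ++ y).map Sum.inr)
    rw [List.map_append]
    exact hleft.trans hright

theorem mem_wordsFrom_append₃ {α β γ : SForm T} {w : List T} :
    w ∈ wordsFrom P (α ++ β ++ γ) ↔
      ∃ x ∈ wordsFrom P α, ∃ y ∈ wordsFrom P β, ∃ z ∈ wordsFrom P γ, x ++ y ++ z = w := by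
  simp only [wordsFrom_append, Language.mem_mul]
  grind

theorem eq_of_mem_wordsFrom_terminal {w w' : List T} (h : w' ∈ wordsFrom P (w.map Sum.inr)) :
    w' = w := by
  obtain heq | ⟨_, hstep, -⟩ := Relation.ReflTransGen.cases_head h
  · exact (List.map_injective_iff.2 Sum.inr_injective heq).symm
  · exact absurd hstep (not_rStep_terminal w _)

theorem exists_length_le_of_unique_word (P : List (Rule T)) :
    ∃ K, ∀ r ∈ P, ∀ x, wordsFrom P r.2 = {x} → x.length ≤ K := by
  have hfin : (⋃ r ∈ {r | r ∈ P}, {x | wordsFrom P r.2 = {x}}).Finite :=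
    P.finite_toSet.biUnion fun r _ => Set.Subsingleton.finite fun x hx y hy =>
      Set.singleton_injective (hx.symm.trans hy)
  obtain ⟨K, hK⟩ := (hfin.image List.length).bddAbove
  exact ⟨K, fun r hr x hx => hK ⟨x, Set.mem_biUnion hr hx, rfl⟩⟩

/- In a derivation of `w`, consider the last sentential form from which a second word is
derivable. The factor below the nonterminal rewritten there is the only word derivable from the
right-hand side of the rule used, so its length is bounded in terms of the rules alone. -/
theorem exists_replace_short_factor (P : List (Rule T)) :
    ∃ K, ∀ (α : SForm T) (w w' : List T), w ∈ wordsFrom P α → w' ∈ wordsFrom P α → w' ≠ w →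
      ∃ u x y v, u ++ x ++ v = w ∧ x.length ≤ K ∧ x ≠ y ∧ u ++ y ++ v ∈ wordsFrom P α := by
  obtain ⟨K, hK⟩ := exists_length_le_of_unique_word P
  refine ⟨K, fun α w w' hw hw' hne => ?_⟩
  change Relation.ReflTransGen (RStep P) α (w.map Sum.inr) at hw
  induction hw using Relation.ReflTransGen.head_induction_on generalizing w' with
  | refl => exact absurd (eq_of_mem_wordsFrom_terminal hw') hne
  | @head α β hstep hw ih =>
    by_cases hβ : ∃ w'' ∈ wordsFrom P β, w'' ≠ w
    · obtain ⟨w'', hw'', hne''⟩ := hβ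
      obtain ⟨u, x, y, v, hxw, hx, hxy, hy⟩ := ih w'' hw'' hne''
      exact ⟨u, x, y, v, hxw, hx, hxy, hstep.mem_wordsFrom hy⟩
    push Not at hβ
    obtain ⟨⟨A, z⟩, hr, p, q, rfl, rfl⟩ := hstep
    obtain ⟨u, hu, x, hx, v, hv, rfl⟩ := mem_wordsFrom_append₃.1 hw
    have only_x : wordsFrom P z = {x} := by
      refine Set.eq_singleton_iff_unique_mem.2 ⟨hx, fun x' hx' => ?_⟩
      simpa using hβ _ (mem_wordsFrom_append₃.2 ⟨u, hu, x', hx', v, hv, rfl⟩)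
    rw [← List.singleton_append, ← List.append_assoc] at hw'
    obtain ⟨u', hu', y, hy, v', hv', rfl⟩ := mem_wordsFrom_append₃.1 hw'
    obtain rfl : u' = u := by
      simpa using hβ _ (mem_wordsFrom_append₃.2 ⟨u', hu', x, hx, v, hv, rfl⟩)
    obtain rfl : v' = v := by
      simpa using hβ _ (mem_wordsFrom_append₃.2 ⟨u', hu', x, hx, v', hv', rfl⟩)
    refine ⟨u', x, y, v', rfl, hK _ hr x only_x, ?_, ?_⟩
    · rintro rfl
      exact hne rfl
    · rwa [← List.singleton_append, ← List.append_assoc]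

end ContextFree

/-! ### The block language -/

section BlockLang

theorem notMem_of_pairwise_le_append {α : Type*} [Preorder α] {u z v : List α} {a b c : α}
    (h : (u ++ z ++ v).Pairwise (· ≤ ·)) (ha : a ∈ z) (hc : c ∈ z) (hab : a < b) (hbc : b < c) :
    b ∉ u ∧ b ∉ v := by
  rw [List.append_assoc, List.pairwise_append, List.pairwise_append] at h
  obtain ⟨-, ⟨-, -, hzv⟩, huz⟩ := h
  exact ⟨fun hb => (huz b hb a (List.mem_append_left v ha)).not_gt hab,
    fun hb => (hzv c hc b hb).not_gt hbc⟩

variable {k : ℕ}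

theorem count_blockWord {j : ℕ} (n : ℕ) (hj : j ≤ k) : (blockWord k n).count j = n := by
  have hone : (List.range (k + 1)).count j = 1 :=
    List.count_eq_one_of_mem List.nodup_range (List.mem_range.2 (Nat.lt_succ_of_le hj))
  rw [blockWord, List.count_flatMap, List.sum_map_eq_nsmul_single j, hone]
  · simp
  · intro i hij _
    simp [List.count_replicate, hij]

theorem blockWord_injective (k : ℕ) : Function.Injective (blockWord k) := fun n m h => by
  simpa only [count_blockWord _ k.zero_le] using congrArg (List.count 0) h

theorem pairwise_le_blockWord (k n : ℕ) : (blockWord k n).Pairwise (· ≤ ·) := by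
  rw [blockWord, List.pairwise_flatMap]
  refine ⟨fun j _ => List.pairwise_replicate.2 (.inr le_rfl), ?_⟩
  refine List.pairwise_lt_range.imp fun hij x hx y hy => ?_
  rw [List.eq_of_mem_replicate hx, List.eq_of_mem_replicate hy]
  exact hij.le

theorem blockWord_zero (k : ℕ) : blockWord k 0 = [] := by simp [blockWord]

theorem eqL_blockLang_iff {L : Set (List ℕ)} :
    EqL L (blockLang k) ↔ blockLang k ⊆ L ∧ L ⊆ Set.range (blockWord k) := by
  have hne {n : ℕ} (hn : 1 ≤ n) : blockWord k n ≠ [] := fun h =>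
    (Nat.one_le_iff_ne_zero.1 hn) (blockWord_injective k (h.trans (blockWord_zero k).symm))
  constructor
  · intro h
    constructor
    · rintro w ⟨n, hn, rfl⟩
      exact (h.ge ⟨⟨n, hn, rfl⟩, hne hn⟩).1
    · intro w hw
      by_cases hnil : w = []
      · exact ⟨0, hnil ▸ blockWord_zero k⟩
      · obtain ⟨n, -, rfl⟩ := (h.le ⟨hw, hnil⟩).1
        exact ⟨n, rfl⟩
  · rintro ⟨hsub, hrange⟩
    refine Set.Subset.antisymm (fun w hw => ⟨?_, hw.2⟩) (Set.sdiff_subset_sdiff_left hsub)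
    obtain ⟨n, rfl⟩ := hrange hw.1
    refine ⟨n, Nat.one_le_iff_ne_zero.2 ?_, rfl⟩
    rintro rfl
    exact hw.2 (blockWord_zero k)

/- One of the two factors contains more zeros than the other, and equally many more letters `k`.
As the words are sorted, this factor leaves no room for the letter `1` outside of it. -/
theorem le_length_of_replace_factor (hk : 2 ≤ k) {n m : ℕ} {u x y v : List ℕ}
    (hx : u ++ x ++ v = blockWord k n) (hy : u ++ y ++ v = blockWord k m) (hxy : x ≠ y) :
    n ≤ x.length := by
  have hcount {j : ℕ} (hj : j ≤ k) :
      u.count j + x.count j + v.count j = n ∧ u.count j + y.count j + v.count j = m := by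
    rw [← count_blockWord n hj, ← count_blockWord m hj, ← hx, ← hy]
    simp only [List.count_append, and_self]
  have hnm : n ≠ m := by
    rintro rfl
    exact hxy (by simpa using hx.trans hy.symm)
  have hnot_one : 1 ∉ u ∧ 1 ∉ v := by
    have h0 := hcount k.zero_le
    have hk' := hcount (le_refl k)
    have {z : List ℕ} {l : ℕ} (hz : u ++ z ++ v = blockWord k l) (h0z : 0 < z.count 0)
        (hkz : 0 < z.count k) : 1 ∉ u ∧ 1 ∉ v :=
      notMem_of_pairwise_le_append (hz ▸ pairwise_le_blockWord k l) (List.count_pos_iff.1 h0z)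
        (List.count_pos_iff.1 hkz) one_pos hk
    rcases hnm.lt_or_gt with hlt | hlt
    · exact this hy (by omega) (by omega)
    · exact this hx (by omega) (by omega)
  calc n = u.count 1 + x.count 1 + v.count 1 := (hcount (by omega)).1.symm
    _ = x.count 1 := by
      rw [List.count_eq_zero_of_not_mem hnot_one.1, List.count_eq_zero_of_not_mem hnot_one.2,
        zero_add, add_zero]
    _ ≤ x.length := List.count_le_length

theorem blockLang_notMem_cffam (hk : 2 ≤ k) : blockLang k ∉ CFFam ℕ := by
  rintro ⟨G, hG⟩
  obtain ⟨hblock, hrange⟩ := eqL_blockLang_iff.1 hG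
  obtain ⟨K, hK⟩ := exists_replace_short_factor G.rules
  have hmem (n : ℕ) : blockWord k (n + 1) ∈ G.lang := hblock ⟨n + 1, by omega, rfl⟩
  have hne : blockWord k (K + 2) ≠ blockWord k (K + 1) := (blockWord_injective k).ne (by omega)
  obtain ⟨u, x, y, v, hx, hlen, hxy, hy⟩ := hK _ _ _ (hmem K) (hmem (K + 1)) hne
  obtain ⟨m, hm⟩ := hrange hy
  have := le_length_of_replace_factor hk hx hm.symm hxy
  omega

end BlockLang

/-! ### Components acting on a concatenation of blocks -/

section Blocks

variable {T σ : Type} {P : List (Rule T)} {k : ℕ}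

theorem rStep_flatMap_iff {ι : Type*} [DecidableEq ι] {l : List ι} (hl : l.Nodup)
    {f : ι → SForm T} {γ : SForm T} :
    RStep P (l.flatMap f) γ ↔
      ∃ i ∈ l, ∃ β, RStep P (f i) β ∧ γ = l.flatMap (Function.update f i β) := by
  induction l generalizing γ with
  | nil => simpa using not_rStep_terminal (P := P) [] γ
  | cons a l ih =>
    obtain ⟨ha, hl⟩ := List.nodup_cons.1 hl
    have hhead (β : SForm T) : l.flatMap (Function.update f a β) = l.flatMap f :=
      List.flatMap_congr fun j hj => Function.update_of_ne (ne_of_mem_of_not_mem hj ha) ..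
    have htail {i : ι} (hi : i ∈ l) (β : SForm T) : Function.update f i β a = f a :=
      Function.update_of_ne (ne_of_mem_of_not_mem hi ha).symm ..
    simp only [List.flatMap_cons, rStep_append_iff, ih hl, List.exists_mem_cons_iff,
      Function.update_self, hhead]
    refine or_congr_right ⟨?_, ?_⟩
    · rintro ⟨_, ⟨i, hi, β, h, rfl⟩, rfl⟩
      exact ⟨i, hi, β, h, by rw [htail hi]⟩
    · rintro ⟨i, hi, β, h, rfl⟩
      exact ⟨_, ⟨i, hi, β, h, rfl⟩, by rw [htail hi]⟩

/-- The sentential form `B 0 (s 0) ⋯ B (k-1) (s (k-1))`, where the `i`-th block is in the local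
state `s i`. -/
def concatBlocks (B : Fin k → σ → SForm T) (s : Fin k → σ) : SForm T :=
  (List.finRange k).flatMap fun i => B i (s i)

/-- The rules `P` act on every block of the family `B` as the relation `ρ` on local states. -/
def ActsAs (P : List (Rule T)) (B : Fin k → σ → SForm T) (ρ : σ → σ → Prop) : Prop :=
  ∀ i p γ, RStep P (B i p) γ ↔ ∃ q, ρ p q ∧ γ = B i q

variable {B : Fin k → σ → SForm T} {ρ : σ → σ → Prop} {s s' : Fin k → σ}

theorem mem_concatBlocks {X : Symb T} : X ∈ concatBlocks B s ↔ ∃ i, X ∈ B i (s i) := by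
  simp [concatBlocks]

theorem ActsAs.rStep_concatBlocks_iff (h : ActsAs P B ρ) {γ : SForm T} :
    RStep P (concatBlocks B s) γ ↔
      ∃ i q, ρ (s i) q ∧ γ = concatBlocks B (Function.update s i q) := by
  have hupdate (i : Fin k) (q : σ) : concatBlocks B (Function.update s i q) =
      (List.finRange k).flatMap (Function.update (fun j => B j (s j)) i (B i q)) :=
    List.flatMap_congr fun j _ => Function.apply_update B s i q j
  simp only [hupdate]
  rw [concatBlocks, rStep_flatMap_iff (List.nodup_finRange k)]
  constructor
  · rintro ⟨i, -, β, hβ, rfl⟩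
    obtain ⟨q, hq, rfl⟩ := (h i _ β).1 hβ
    exact ⟨i, q, hq, rfl⟩
  · rintro ⟨i, q, hq, rfl⟩
    exact ⟨i, List.mem_finRange i, B i q, (h i _ _).2 ⟨q, hq, rfl⟩, rfl⟩

theorem ActsAs.stepsN_card (h : ActsAs P B ρ) {A : Finset (Fin k)}
    (hA : ∀ i ∈ A, ρ (s i) (s' i)) (hAc : ∀ i ∉ A, s' i = s i) :
    StepsN P A.card (concatBlocks B s) (concatBlocks B s') := by
  induction A using Finset.induction_on generalizing s with
  | empty => exact congrArg _ (funext fun i => (hAc i (Finset.notMem_empty i)).symm)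
  | insert a A ha ih =>
    rw [Finset.card_insert_of_notMem ha]
    refine ⟨_, h.rStep_concatBlocks_iff.2 ⟨a, s' a, hA a (A.mem_insert_self a), rfl⟩, ih ?_ ?_⟩
    · intro i hi
      rw [Function.update_of_ne (ne_of_mem_of_not_mem hi ha)]
      exact hA i (Finset.mem_insert_of_mem hi)
    · intro i hi
      by_cases hia : i = a
      · rw [hia, Function.update_self]
      · rw [Function.update_of_ne hia]
        exact hAc i (by simp [hia, hi])

theorem ActsAs.exists_of_stepsN (h : ActsAs P B ρ) (hρ : ∀ p q r, ρ p q → ¬ ρ q r) {m : ℕ}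
    {γ : SForm T} (hγ : StepsN P m (concatBlocks B s) γ) :
    ∃ s' : Fin k → σ, γ = concatBlocks B s' ∧
      ∃ A : Finset (Fin k), A.card = m ∧ (∀ i ∈ A, ρ (s i) (s' i)) ∧ ∀ i ∉ A, s' i = s i := by
  induction m generalizing s with
  | zero => exact ⟨s, hγ.symm, ∅, rfl, by simp⟩
  | succ m ih =>
    obtain ⟨_, hstep, hrest⟩ := hγ
    obtain ⟨a, q, hq, rfl⟩ := h.rStep_concatBlocks_iff.1 hstep
    obtain ⟨s', rfl, A, rfl, hA, hAc⟩ := ih hrest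
    have ha : a ∉ A := fun ha => hρ _ _ _ hq (by simpa using hA a ha)
    refine ⟨s', rfl, insert a A, Finset.card_insert_of_notMem ha, fun i hi => ?_, fun i hi => ?_⟩
    · by_cases hia : i = a
      · subst hia
        rw [hAc i ha]
        simpa using hq
      · simpa [hia] using hA i (Finset.mem_of_mem_insert_of_ne hi hia)
    · rw [Finset.mem_insert, not_or] at hi
      rw [hAc i hi.2, Function.update_of_ne hi.1]

theorem ActsAs.stepsN_of_forall (h : ActsAs P B ρ) (hs : ∀ i, ρ (s i) (s' i)) :
    StepsN P k (concatBlocks B s) (concatBlocks B s') := by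
  simpa using h.stepsN_card (A := Finset.univ) (fun i _ => hs i) (by simp)

theorem ActsAs.forall_of_stepsN (h : ActsAs P B ρ) (hρ : ∀ p q r, ρ p q → ¬ ρ q r) {m : ℕ}
    (hm : k ≤ m) {γ : SForm T} (hγ : StepsN P m (concatBlocks B s) γ) :
    ∃ s' : Fin k → σ, γ = concatBlocks B s' ∧ ∀ i, ρ (s i) (s' i) := by
  obtain ⟨s', rfl, A, rfl, hA, -⟩ := h.exists_of_stepsN hρ hγ
  have huniv : A = Finset.univ := by
    rw [← Finset.card_eq_iff_eq_univ]
    exact le_antisymm A.card_le_univ (by simpa using hm)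
  exact ⟨s', rfl, fun i => hA i (huniv ▸ Finset.mem_univ i)⟩

theorem ActsAs.not_rStep_of_forall (h : ActsAs P B ρ) (hs : ∀ i q, ¬ ρ (s i) q) (γ : SForm T) :
    ¬ RStep P (concatBlocks B s) γ := by
  rw [h.rStep_concatBlocks_iff]
  rintro ⟨i, q, hq, -⟩
  exact hs i q hq

end Blocks

theorem CDGS.lang_mono {T : Type} (G : CDGS T) {f g : Mode}
    (h : ∀ (P : List (Rule T)) m y, modeOK P f m y → modeOK P g m y) : G.lang f ⊆ G.lang g :=
  fun _ hw => Relation.TransGen.mono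
    (fun _ y ⟨i, m, hsteps, hmode⟩ => ⟨i, m, hsteps, h (G.comp i) m y hmode⟩) _ _ hw

/-! ### The grammar system -/

section BlockSystem

variable {k : ℕ}

/-- The phase of a block: its nonterminal is `A_i` (`fresh`), its primed copy `A_i'`
(`primed`), or absent (`done`). -/
inductive Phase where
  | fresh
  | primed
  | done

/-- The nonterminal part of block `i`. The nonterminals are coded as `0` for the start symbol,
`2 * i + 1` for `A_i` and `2 * i + 2` for `A_i'`. -/
def nonterminalPart (i : ℕ) : Phase → SForm ℕ
  | .fresh => [Sum.inl (2 * i + 1)]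
  | .primed => [Sum.inl (2 * i + 2)]
  | .done => []

/-- The terminals on the left of the nonterminal of block `i`. All letters but the first one are
produced on the right of a nonterminal; the letter `0` is produced by block `0` on the left. -/
def leftPart (i n : ℕ) : List ℕ := if i = 0 then List.replicate n 0 else []

/-- The `i`-th block of a sentential form, after `p.1` rounds and in phase `p.2`. -/
def block (i : Fin k) (p : ℕ × Phase) : SForm ℕ :=
  (leftPart i p.1).map Sum.inr ++ nonterminalPart i p.2 ++
    (List.replicate p.1 (i + 1 : ℕ)).map Sum.inr

/-- The component that rewrites each `A_i` to `A_i'` or to nothing, adding one letter of each kind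
belonging to block `i`. -/
def growRules (k : ℕ) : List (Rule ℕ) :=
  (List.finRange k).flatMap fun i : Fin k =>
    [(2 * i + 1, block i (1, .primed)), (2 * i + 1, block i (1, .done))]

/-- The component that rewrites each `A_i'` to `A_i` and expands the start symbol. The rule
`S → S` lets the expansion last for any positive number of steps. -/
def resetRules (k : ℕ) : List (Rule ℕ) :=
  (0, [Sum.inl 0]) :: (0, concatBlocks block fun _ : Fin k => (0, .fresh)) ::
    (List.finRange k).map fun i : Fin k => (2 * i + 2, block i (0, .fresh))

theorem mem_growRules {r : Rule ℕ} :
    r ∈ growRules k ↔ ∃ i : Fin k,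
      r = ((2 * i + 1 : ℕ), block i (1, .primed)) ∨ r = ((2 * i + 1 : ℕ), block i (1, .done)) := by
  simp [growRules]

theorem mem_resetRules {r : Rule ℕ} :
    r ∈ resetRules k ↔ r = (0, [Sum.inl 0]) ∨
      r = (0, concatBlocks block fun _ : Fin k => (0, .fresh)) ∨
      ∃ i : Fin k, r = ((2 * i + 2 : ℕ), block i (0, .fresh)) := by
  simp [resetRules, eq_comm]

/-- The CD grammar system with the components `growRules k` and `resetRules k`. -/
def blockSystem (k : ℕ) : CDGS ℕ where
  deg := 2
  start := 0
  comp := ![growRules k, resetRules k]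

/-- The effect of `growRules` on the state of a block. -/
inductive Grow : ℕ × Phase → ℕ × Phase → Prop
  | prime (n : ℕ) : Grow (n, .fresh) (n + 1, .primed)
  | finish (n : ℕ) : Grow (n, .fresh) (n + 1, .done)

/-- The effect of `resetRules` on the state of a block. -/
inductive Reset : ℕ × Phase → ℕ × Phase → Prop
  | unprime (n : ℕ) : Reset (n, .primed) (n, .fresh)

theorem Grow.not_grow (p q r : ℕ × Phase) (h : Grow p q) : ¬ Grow q r := by
  cases h <;> exact nofun

theorem Reset.not_reset (p q r : ℕ × Phase) (h : Reset p q) : ¬ Reset q r := by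
  cases h
  exact nofun

theorem Grow.fst_eq {p q : ℕ × Phase} (h : Grow p q) : q.1 = p.1 + 1 := by cases h <;> rfl

theorem Reset.fst_eq {p q : ℕ × Phase} (h : Reset p q) : q.1 = p.1 := by cases h; rfl

theorem leftPart_append_block_append (i : Fin k) (n m : ℕ) (c : Phase) :
    (leftPart i n).map Sum.inr ++ block i (m, c) ++
      (List.replicate n (i + 1 : ℕ)).map Sum.inr = block i (n + m, c) := by
  have hleft : leftPart i (n + m) = leftPart i n ++ leftPart i m := by
    unfold leftPart
    split_ifs <;> simp
  have hright : List.replicate (n + m) (i + 1 : ℕ) =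
      List.replicate m (i + 1 : ℕ) ++ List.replicate n (i + 1 : ℕ) := by
    simp [Nat.add_comm]
  simp only [block, hleft, hright, List.map_append, List.append_assoc]

theorem rStep_block_iff {P : List (Rule ℕ)} {i : Fin k} {n : ℕ} {c : Phase} {γ : SForm ℕ} :
    RStep P (block i (n, c)) γ ↔ ∃ β, RStep P (nonterminalPart i c) β ∧
      γ = (leftPart i n).map Sum.inr ++ β ++ (List.replicate n (i + 1 : ℕ)).map Sum.inr := by
  simp only [block, rStep_append_terminal_iff, rStep_terminal_append_iff]
  grind

theorem rStep_growRules_nonterminalPart_iff {i : Fin k} {c : Phase} {β : SForm ℕ} :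
    RStep (growRules k) (nonterminalPart i c) β ↔
      c = .fresh ∧ (β = block i (1, .primed) ∨ β = block i (1, .done)) := by
  cases c with
  | fresh =>
    simp only [nonterminalPart, rStep_nonterminal_iff, mem_growRules, Prod.mk.injEq]
    grind
  | primed =>
    simp only [nonterminalPart, rStep_nonterminal_iff, mem_growRules, Prod.mk.injEq]
    grind
  | done => simpa [nonterminalPart] using not_rStep_terminal [] β

theorem rStep_resetRules_nonterminalPart_iff {i : Fin k} {c : Phase} {β : SForm ℕ} :
    RStep (resetRules k) (nonterminalPart i c) β ↔ c = .primed ∧ β = block i (0, .fresh) := by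
  cases c with
  | fresh =>
    simp only [nonterminalPart, rStep_nonterminal_iff, mem_resetRules, Prod.mk.injEq]
    grind
  | primed =>
    simp only [nonterminalPart, rStep_nonterminal_iff, mem_resetRules, Prod.mk.injEq]
    grind
  | done => simpa [nonterminalPart] using not_rStep_terminal [] β

theorem actsAs_growRules (k : ℕ) : ActsAs (growRules k) (block (k := k)) Grow := by
  rintro i ⟨n, c⟩ γ
  simp only [rStep_block_iff, rStep_growRules_nonterminalPart_iff]
  constructor
  · rintro ⟨_, ⟨rfl, rfl | rfl⟩, rfl⟩
    · exact ⟨_, .prime n, leftPart_append_block_append ..⟩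
    · exact ⟨_, .finish n, leftPart_append_block_append ..⟩
  · rintro ⟨_, ⟨⟩ | ⟨⟩, rfl⟩
    · exact ⟨_, ⟨rfl, .inl rfl⟩, (leftPart_append_block_append ..).symm⟩
    · exact ⟨_, ⟨rfl, .inr rfl⟩, (leftPart_append_block_append ..).symm⟩

theorem actsAs_resetRules (k : ℕ) : ActsAs (resetRules k) (block (k := k)) Reset := by
  rintro i ⟨n, c⟩ γ
  simp only [rStep_block_iff, rStep_resetRules_nonterminalPart_iff]
  constructor
  · rintro ⟨_, ⟨rfl, rfl⟩, rfl⟩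
    exact ⟨_, .unprime n, leftPart_append_block_append ..⟩
  · rintro ⟨_, ⟨⟩, rfl⟩
    exact ⟨_, ⟨rfl, rfl⟩, (leftPart_append_block_append i n 0 .fresh).symm⟩

theorem concatBlocks_done (hk : 1 ≤ k) (n : ℕ) :
    concatBlocks block (fun _ : Fin k => (n, .done)) = (blockWord k n).map Sum.inr := by
  obtain ⟨k, rfl⟩ := Nat.exists_eq_add_of_le' hk
  have hrange : List.range (k + 2) =
      0 :: 1 :: (List.finRange k).map fun i : Fin k => (i + 2 : ℕ) := by
    simp [List.range_succ_eq_map, ← List.map_coe_finRange_eq_range]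
  simp [concatBlocks, blockWord, hrange, List.finRange_succ, block, leftPart, nonterminalPart,
    List.flatMap_map, List.map_flatMap]

theorem block_eq_nil_iff {i : Fin k} {n : ℕ} {c : Phase} :
    block i (n, c) = [] ↔ n = 0 ∧ c = .done := by
  cases c <;> simp +contextual [block, leftPart, nonterminalPart]

theorem lamFree_blockSystem (hk : 1 ≤ k) : (blockSystem k).LamFree := by
  have hstart : (concatBlocks block fun _ : Fin k => (0, .fresh)) ≠ [] :=
    List.ne_nil_of_mem (a := Sum.inl 1) <|
      mem_concatBlocks.2 ⟨⟨0, hk⟩, by simp [block, nonterminalPart]⟩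
  refine Fin.forall_fin_two.2 ⟨fun r hr => ?_, fun r hr => ?_⟩
  · obtain ⟨i, rfl | rfl⟩ := mem_growRules.1 hr <;> simp [block_eq_nil_iff]
  · obtain rfl | rfl | ⟨i, rfl⟩ := mem_resetRules.1 hr
    · exact List.cons_ne_nil _ _
    · exact hstart
    · simp [block_eq_nil_iff]

theorem not_rStep_growRules_start (γ : SForm ℕ) : ¬ RStep (growRules k) [Sum.inl 0] γ := by
  simp [rStep_nonterminal_iff, mem_growRules]

theorem rStep_resetRules_start_iff {γ : SForm ℕ} :
    RStep (resetRules k) [Sum.inl 0] γ ↔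
      γ = [Sum.inl 0] ∨ γ = concatBlocks block fun _ : Fin k => (0, .fresh) := by
  simp [rStep_nonterminal_iff, mem_resetRules]

theorem modeStep_blockSystem_iff {f : Mode} {x y : SForm ℕ} :
    (blockSystem k).ModeStep f x y ↔
      (∃ m, StepsN (growRules k) m x y ∧ modeOK (growRules k) f m y) ∨
        ∃ m, StepsN (resetRules k) m x y ∧ modeOK (resetRules k) f m y :=
  Fin.exists_fin_two

theorem stepsN_resetRules_start (m : ℕ) :
    StepsN (resetRules k) (m + 1) [Sum.inl 0]
      (concatBlocks block fun _ : Fin k => (0, .fresh)) := by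
  induction m with
  | zero => exact ⟨_, rStep_resetRules_start_iff.2 (.inr rfl), rfl⟩
  | succ m ih => exact ⟨_, rStep_resetRules_start_iff.2 (.inl rfl), ih⟩

theorem modeStep_start (hk : 1 ≤ k) :
    (blockSystem k).ModeStep (.conj .t (.eq k)) [Sum.inl 0]
      (concatBlocks block fun _ : Fin k => (0, .fresh)) := by
  obtain ⟨m, rfl⟩ := Nat.exists_eq_add_of_le' hk
  exact modeStep_blockSystem_iff.2 <| .inr ⟨m + 1, stepsN_resetRules_start m,
    fun ⟨z, hz⟩ => (actsAs_resetRules _).not_rStep_of_forall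
      (fun _ q (h : Reset (0, .fresh) q) => nomatch h) z hz, rfl⟩

theorem modeStep_of_grow {s s' : Fin k → ℕ × Phase} (h : ∀ i, Grow (s i) (s' i)) :
    (blockSystem k).ModeStep (.conj .t (.eq k)) (concatBlocks block s) (concatBlocks block s') :=
  modeStep_blockSystem_iff.2 <| .inl ⟨k, (actsAs_growRules k).stepsN_of_forall h,
    fun ⟨z, hz⟩ => (actsAs_growRules k).not_rStep_of_forall
      (fun i q => Grow.not_grow _ _ q (h i)) z hz, rfl⟩

theorem modeStep_of_reset {s s' : Fin k → ℕ × Phase} (h : ∀ i, Reset (s i) (s' i)) :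
    (blockSystem k).ModeStep (.conj .t (.eq k)) (concatBlocks block s) (concatBlocks block s') :=
  modeStep_blockSystem_iff.2 <| .inr ⟨k, (actsAs_resetRules k).stepsN_of_forall h,
    fun ⟨z, hz⟩ => (actsAs_resetRules k).not_rStep_of_forall
      (fun i q => Reset.not_reset _ _ q (h i)) z hz, rfl⟩

theorem blockLang_subset_lang_blockSystem (hk : 1 ≤ k) :
    blockLang k ⊆ (blockSystem k).lang (.conj .t (.eq k)) := by
  have hfresh (n : ℕ) : Relation.TransGen ((blockSystem k).ModeStep (.conj .t (.eq k)))
      [Sum.inl 0] (concatBlocks block fun _ : Fin k => (n, .fresh)) := by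
    induction n with
    | zero => exact .single (modeStep_start hk)
    | succ n ih =>
      exact (ih.tail (modeStep_of_grow fun _ => .prime n)).tail
        (modeStep_of_reset fun _ => .unprime (n + 1))
  rintro w ⟨n, hn, rfl⟩
  obtain ⟨n, rfl⟩ := Nat.exists_eq_add_of_le' hn
  change Relation.TransGen _ [Sum.inl 0] _
  rw [← concatBlocks_done hk]
  exact (hfresh n).tail (modeStep_of_grow fun _ => .finish n)

/-- The invariant of the derivations of the block system in the mode `≥ k`: the sentential form is
the start symbol, or all its blocks have been through equally many rounds. -/
inductive Balanced (k : ℕ) : SForm ℕ → Prop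
  | start : Balanced k [Sum.inl 0]
  | blocks (n : ℕ) (c : Fin k → Phase) : Balanced k (concatBlocks block fun i => (n, c i))

theorem Balanced.of_stepsN_growRules {m : ℕ} (hm : k ≤ m) {x y : SForm ℕ}
    (hx : Balanced k x) (h : StepsN (growRules k) m x y) : Balanced k y := by
  obtain _ | ⟨n, c⟩ := hx
  · cases m with
    | zero => exact h ▸ .start
    | succ m =>
      obtain ⟨z, hz, -⟩ := h
      exact absurd hz (not_rStep_growRules_start z)
  · obtain ⟨s', rfl, hs'⟩ := (actsAs_growRules k).forall_of_stepsN Grow.not_grow hm h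
    have hround (i : Fin k) : s' i = (n + 1, (s' i).2) := Prod.ext (hs' i).fst_eq rfl
    rw [funext hround]
    exact .blocks (n + 1) fun i => (s' i).2

theorem Balanced.of_rStep_resetRules {x y : SForm ℕ} (hx : Balanced k x)
    (h : RStep (resetRules k) x y) : Balanced k y := by
  obtain _ | ⟨n, c⟩ := hx
  · obtain rfl | rfl := rStep_resetRules_start_iff.1 h
    · exact .start
    · exact .blocks 0 fun _ => .fresh
  · obtain ⟨i, ⟨n', c'⟩, hq, rfl⟩ := (actsAs_resetRules k).rStep_concatBlocks_iff.1 h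
    obtain rfl : n' = n := hq.fst_eq
    have hupdate : Function.update (fun j => (n', c j)) i (n', c') =
        fun j => (n', Function.update c i c' j) :=
      funext fun j => (Function.apply_update (fun _ d => (n', d)) c i c' j).symm
    rw [hupdate]
    exact .blocks n' _

theorem Balanced.of_stepsN_resetRules {m : ℕ} {x y : SForm ℕ} (hx : Balanced k x)
    (h : StepsN (resetRules k) m x y) : Balanced k y := by
  induction m generalizing x with
  | zero => exact h ▸ hx
  | succ m ih =>
    obtain ⟨z, hz, hrest⟩ := h
    exact ih (hx.of_rStep_resetRules hz) hrest

theorem Balanced.of_modeStep {x y : SForm ℕ} (hx : Balanced k x)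
    (h : (blockSystem k).ModeStep (.ge k) x y) : Balanced k y := by
  obtain ⟨m, h, hm⟩ | ⟨m, h, -⟩ := modeStep_blockSystem_iff.1 h
  · exact hx.of_stepsN_growRules hm h
  · exact hx.of_stepsN_resetRules h

theorem Balanced.mem_range_blockWord (hk : 1 ≤ k) {w : List ℕ} (h : Balanced k (w.map Sum.inr)) :
    w ∈ Set.range (blockWord k) := by
  generalize hx : w.map Sum.inr = x at h
  obtain _ | ⟨n, c⟩ := h
  · simp [List.map_eq_cons_iff] at hx
  · have hterminal (i : Fin k) (A : ℕ) : Sum.inl A ∉ nonterminalPart i (c i) := fun hA => by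
      have hmem : Sum.inl A ∈ w.map Sum.inr := hx ▸ mem_concatBlocks.2 ⟨i, by simp [block, hA]⟩
      simp at hmem
    have hdone (i : Fin k) : c i = .done := by
      cases hi : c i with
      | fresh => exact absurd (by simp [hi, nonterminalPart]) (hterminal i (2 * i + 1))
      | primed => exact absurd (by simp [hi, nonterminalPart]) (hterminal i (2 * i + 2))
      | done => rfl
    refine ⟨n, (Sum.inr_injective (α := ℕ)).list_map ?_⟩
    rw [← concatBlocks_done hk, hx]
    simp only [hdone]

theorem lang_blockSystem_subset (hk : 1 ≤ k) :
    (blockSystem k).lang (.ge k) ⊆ Set.range (blockWord k) := by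
  intro w hw
  change Relation.TransGen _ [Sum.inl 0] _ at hw
  refine Balanced.mem_range_blockWord hk ?_
  generalize w.map Sum.inr = x at hw
  induction hw with
  | single h => exact Balanced.start.of_modeStep h
  | tail _ h ih => exact ih.of_modeStep h

theorem blockLang_mem_cdFam (hk : 1 ≤ k) {f : Mode}
    (hf : ∀ (P : List (Rule ℕ)) m y, modeOK P (.conj .t (.eq k)) m y → modeOK P f m y)
    (hf' : ∀ (P : List (Rule ℕ)) m y, modeOK P f m y → modeOK P (.ge k) m y) :
    blockLang k ∈ CDFam ℕ true 2 f :=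
  ⟨blockSystem k, le_rfl, fun _ => lamFree_blockSystem hk, eqL_blockLang_iff.2
    ⟨(blockLang_subset_lang_blockSystem hk).trans (CDGS.lang_mono _ hf),
      (CDGS.lang_mono _ hf').trans (lang_blockSystem_subset hk)⟩⟩

end BlockSystem

/-- For every k ≥ 2, the (non-context-free) language
L = { a_1^n a_2^n ⋯ a_{k+1}^n | n ≥ 1 } belongs both to L(CD_2, CF−λ, (t∧≥k))
and to L(CD_2, CF−λ, (t∧=k)). -/
theorem stmt5 (k : ℕ) (hk : 2 ≤ k) :
    blockLang k ∉ CFFam ℕ ∧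
    blockLang k ∈ CDFam ℕ true 2 (Mode.conj Mode.t (Mode.ge k)) ∧
    blockLang k ∈ CDFam ℕ true 2 (Mode.conj Mode.t (Mode.eq k)) :=
  have hk' : 1 ≤ k := by omega
  ⟨blockLang_notMem_cffam hk,
    blockLang_mem_cdFam hk' (fun _ _ _ h => ⟨h.1, h.2.ge⟩) (fun _ _ _ h => h.2),
    blockLang_mem_cdFam hk' (fun _ _ _ h => h) (fun _ _ _ h => h.2.ge)⟩

end CDHybrid
end

section
/- For all n, k ∈ ℕ and every Δ ∈ {≤, =}, every language generated by a CD grammar system with at most n context-free components working in the (t∧Δk)-mode is a programmed language with appearance checking of index at most n·k: L(CD_n, CF[−λ], (t∧Δk)) ⊆ L_{n·k}(P, CF[−λ], ac), both with and without erasing rules. -/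
namespace CDHybrid

/-! A turn of at most `k` steps that exhausts a component `P` rewrites at most `k` occurrences of
left-hand sides of `P` and leaves all other occurrences alone. Tracing a terminating derivation
backwards through the `n` components, every sentential form has at most `n * k` nonterminals.

A programmed grammar simulates a turn by counting its steps in the label and by running through the
rules of the component with appearance checking at the end. A programmed derivation may stop in any
label, so a turn must not reach a terminal word before its last step: the nonterminal to be
rewritten is first replaced by a marker, and, unless the right-hand side contains a nonterminal, the
marker is rewritten only after another nonterminal has been found. The marker takes the place of a
nonterminal, so the index is unaffected. -/

/-! ### Turns -/

section Turns

variable {T : Type}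

/-- The constraint that a mode puts on the number of steps; the `t`-mode puts none. -/
def Mode.lengths : Mode → Set ℕ
  | .eq k => {k}
  | .le k => Set.Iic k
  | .ge k => Set.Ici k
  | .star => Set.univ
  | .t => Set.univ
  | .conj f g => f.lengths ∩ g.lengths

/-- No rule of `P` is applicable to `x`: the condition that the `t`-mode puts on the result. -/
def Exhausted (P : List (Rule T)) (x : SForm T) : Prop := ∀ r ∈ P, Sum.inl r.1 ∉ x

lemma exhausted_iff_not_exists_rStep {P : List (Rule T)} {x : SForm T} :
    Exhausted P x ↔ ¬ ∃ z, RStep P x z := by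
  refine ⟨fun h ⟨_, r, hr, u, v, hx, _⟩ => h r hr (by simp [hx]), fun h r hr hx => ?_⟩
  obtain ⟨u, v, rfl⟩ := List.append_of_mem hx
  exact h ⟨_, r, hr, u, v, rfl, rfl⟩

lemma modeOK_iff_mem_lengths {P : List (Rule T)} {m : ℕ} {y : SForm T} (hy : Exhausted P y)
    (f : Mode) : modeOK P f m y ↔ m ∈ f.lengths := by
  induction f with
  | t => exact iff_of_true (exhausted_iff_not_exists_rStep.1 hy) trivial
  | conj f g ihf ihg => exact and_congr ihf ihg
  | _ => exact Iff.rfl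

lemma modeOK_conj_t_iff {P : List (Rule T)} {m : ℕ} {y : SForm T} (g : Mode) :
    modeOK P (.conj .t g) m y ↔ Exhausted P y ∧ m ∈ g.lengths := by
  rw [modeOK, modeOK, ← exhausted_iff_not_exists_rStep]
  exact and_congr_right fun hy => modeOK_iff_mem_lengths hy g

lemma StepsN.snoc {P : List (Rule T)} {m : ℕ} {x y z : SForm T} (h : StepsN P m x y)
    (hyz : RStep P y z) : StepsN P (m + 1) x z := by
  induction m generalizing x with
  | zero =>
    obtain rfl : x = y := h
    exact ⟨z, hyz, rfl⟩
  | succ m ih =>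
    obtain ⟨x', hxx', h⟩ := h
    exact ⟨x', hxx', ih h⟩

namespace CDGS

variable {G : CDGS T} {K : Set ℕ} {i : Fin G.deg} {r : ℕ} {x y : SForm T}

/-- A derivation by a single component of `G` which exhausts that component and whose number of
steps lies in `K`. -/
def Turn (G : CDGS T) (K : Set ℕ) (x y : SForm T) : Prop :=
  ∃ i, ∃ m ∈ K, StepsN (G.comp i) m x y ∧ Exhausted (G.comp i) y

lemma modeStep_conj_t (G : CDGS T) (g : Mode) : G.ModeStep (.conj .t g) = G.Turn g.lengths := by
  ext x y
  simp only [ModeStep, Turn, modeOK_conj_t_iff]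
  exact exists_congr fun _ => exists_congr fun _ => by tauto

/-- The sentential forms of `G` between two turns. -/
def Reachable (G : CDGS T) (K : Set ℕ) (x : SForm T) : Prop :=
  Relation.ReflTransGen (G.Turn K) [Sum.inl G.start] x

lemma mem_lang_conj_t_iff {g : Mode} {w : List T} :
    w ∈ G.lang (.conj .t g) ↔ G.Reachable g.lengths (w.map Sum.inr) := by
  have hw : (w.map Sum.inr : SForm T) ≠ [Sum.inl G.start] := by
    cases w <;> simp
  rw [lang, Set.mem_ofPred_eq, modeStep_conj_t, Reachable, Relation.reflTransGen_iff_eq_or_transGen]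
  exact (or_iff_right hw).symm

/-- The sentential form `x` occurs in a turn of component `i`, and `r` further steps complete that
turn to a length in `K`. -/
def MidTurn (G : CDGS T) (K : Set ℕ) (i : Fin G.deg) (r : ℕ) (x : SForm T) : Prop :=
  ∃ x₀ m, G.Reachable K x₀ ∧ StepsN (G.comp i) m x₀ x ∧ m + r ∈ K

lemma Reachable.midTurn (hx : G.Reachable K x) (i : Fin G.deg) (hr : r ∈ K) : G.MidTurn K i r x :=
  ⟨x, 0, hx, rfl, by rwa [zero_add]⟩

lemma MidTurn.step (hx : G.MidTurn K i (r + 1) x) (hxy : RStep (G.comp i) x y) :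
    G.MidTurn K i r y := by
  obtain ⟨x₀, m, hx₀, hm, hK⟩ := hx
  exact ⟨x₀, m + 1, hx₀, hm.snoc hxy, by rwa [add_right_comm, add_assoc]⟩

lemma MidTurn.reachable (hx : G.MidTurn K i 0 x) (hx' : Exhausted (G.comp i) x) :
    G.Reachable K x := by
  obtain ⟨x₀, m, hx₀, hm, hK⟩ := hx
  exact hx₀.tail ⟨i, m, hK, hm, hx'⟩

end CDGS

end Turns

/-! ### The index of terminating derivations -/

section Index

variable {T : Type}

open Classical in
/-- The number of occurrences in `x` of nonterminals from `D`. -/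
noncomputable def ntCountIn (D : Set ℕ) (x : SForm T) : ℕ :=
  x.countP fun s => decide (s ∈ Sum.inl '' D)

lemma ntCountIn_univ (x : SForm T) : ntCountIn Set.univ x = ntCount x := by
  rw [ntCountIn, ntCount, ← List.countP_eq_length_filter]
  refine List.countP_congr fun s _ => ?_
  cases s <;> simp

lemma ntCountIn_eq_zero {D : Set ℕ} {x : SForm T} (h : ∀ A ∈ D, Sum.inl A ∉ x) :
    ntCountIn D x = 0 := by
  classical
  refine List.countP_eq_zero.2 fun s hs hsD => ?_
  obtain ⟨A, hA, rfl⟩ := of_decide_eq_true hsD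
  exact h A hA hs

lemma ntCountIn_le_add {D E F : Set ℕ} (h : D ⊆ E ∪ F) (x : SForm T) :
    ntCountIn D x ≤ ntCountIn E x + ntCountIn F x := by
  induction x with
  | nil => simp [ntCountIn]
  | cons s x ih =>
    have hs : s ∈ Sum.inl '' D → s ∈ Sum.inl '' E ∨ s ∈ Sum.inl '' F := fun hs => by
      simpa only [Set.image_union, Set.mem_union] using Set.image_mono h hs
    simp only [ntCountIn, List.countP_cons, decide_eq_true_eq] at ih ⊢
    split_ifs <;> grind

lemma ntCountIn_le_of_stepsN {D : Set ℕ} {P : List (Rule T)} {m : ℕ} {x y : SForm T}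
    (hD : ∀ r ∈ P, r.1 ∉ D) (h : StepsN P m x y) : ntCountIn D x ≤ ntCountIn D y := by
  induction m generalizing x with
  | zero => exact (congrArg _ h).le
  | succ m ih =>
    obtain ⟨z, ⟨r, hr, u, v, rfl, rfl⟩, h⟩ := h
    refine le_trans ?_ (ih h)
    simp [ntCountIn, List.countP_append, hD r hr]

lemma ntCountIn_le_add_of_stepsN (D : Set ℕ) {P : List (Rule T)} {m : ℕ} {x y : SForm T}
    (h : StepsN P m x y) : ntCountIn D x ≤ ntCountIn D y + m := by
  induction m generalizing x with
  | zero => exact (congrArg _ h).le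
  | succ m ih =>
    obtain ⟨z, ⟨r, _, u, v, rfl, rfl⟩, h⟩ := h
    have hstep : ntCountIn D (u ++ Sum.inl r.1 :: v) ≤ ntCountIn D (u ++ r.2 ++ v) + 1 := by
      simp only [ntCountIn, List.countP_append, List.countP_cons]
      split <;> omega
    have := ih h
    omega

lemma ntCount_replace (A B : ℕ) (u v : SForm T) :
    ntCount (u ++ Sum.inl A :: v) = ntCount (u ++ Sum.inl B :: v) := by
  simp [ntCount, List.filter_cons]

namespace CDGS

variable {G : CDGS T} {k : ℕ} {i : Fin G.deg} {x y : SForm T}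

/-- The nonterminals that no component in `F` rewrites. -/
def untouched (G : CDGS T) (F : Finset (Fin G.deg)) : Set ℕ :=
  {A | ∀ i ∈ F, ∀ r ∈ G.comp i, r.1 ≠ A}

/-- Each component outside `F` accounts for at most `k` occurrences of nonterminals untouched by
`F`. Unlike the bound `ntCount x ≤ G.deg * k`, its case `F = ∅`, this property passes from the end
of a turn of length at most `k` to its beginning. -/
def IndexBounded (G : CDGS T) (k : ℕ) (x : SForm T) : Prop :=
  ∀ F : Finset (Fin G.deg), ntCountIn (G.untouched F) x ≤ Fᶜ.card * k

lemma indexBounded_map_inr (G : CDGS T) (k : ℕ) (w : List T) :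
    G.IndexBounded k (w.map Sum.inr) := fun F =>
  (ntCountIn_eq_zero (D := G.untouched F) (by simp)).trans_le (Nat.zero_le _)

lemma IndexBounded.ntCount_le (h : G.IndexBounded k x) : ntCount x ≤ G.deg * k := by
  have huniv : G.untouched ∅ = Set.univ := by simp [untouched]
  simpa [huniv, ntCountIn_univ] using h ∅

lemma IndexBounded.of_stepsN {m : ℕ} (hy : G.IndexBounded k y) (hexh : Exhausted (G.comp i) y)
    (hm : m ≤ k) (h : StepsN (G.comp i) m x y) : G.IndexBounded k x := by
  intro F
  have hmono (F : Finset (Fin G.deg)) (hi : i ∈ F) :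
      ntCountIn (G.untouched F) x ≤ Fᶜ.card * k :=
    (ntCountIn_le_of_stepsN (D := G.untouched F) (fun r hr hF => hF i hi r hr rfl) h).trans
      (hy F)
  by_cases hi : i ∈ F
  · exact hmono F hi
  let heads : Set ℕ := {A | ∃ r ∈ G.comp i, r.1 = A}
  have hheads : ntCountIn heads x ≤ k := by
    have hy0 : ntCountIn heads y = 0 := ntCountIn_eq_zero fun _ ⟨r, hr, hrA⟩ => hrA ▸ hexh r hr
    have := ntCountIn_le_add_of_stepsN heads h
    omega
  have hsplit : G.untouched F ⊆ G.untouched (insert i F) ∪ heads := by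
    intro A hA
    by_cases hAi : A ∈ heads
    · exact Or.inr hAi
    · refine Or.inl fun i' hi' r hr hrA => ?_
      rcases Finset.mem_insert.1 hi' with rfl | hi'
      · exact hAi ⟨r, hr, hrA⟩
      · exact hA i' hi' r hr hrA
  have hcard : Fᶜ.card = (insert i F)ᶜ.card + 1 := by
    rw [Finset.compl_insert, Finset.card_erase_add_one (Finset.mem_compl.2 hi)]
  calc ntCountIn (G.untouched F) x
      ≤ ntCountIn (G.untouched (insert i F)) x + ntCountIn heads x := ntCountIn_le_add hsplit x
    _ ≤ (insert i F)ᶜ.card * k + k := add_le_add (hmono _ (Finset.mem_insert_self i F)) hheads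
    _ = Fᶜ.card * k := by rw [hcard, add_one_mul]

lemma indexBounded_of_derives {K : Set ℕ} (hK : K ⊆ Set.Iic k) {w : List T}
    (h : Relation.ReflTransGen (G.Turn K) x (w.map Sum.inr)) : G.IndexBounded k x := by
  induction h using Relation.ReflTransGen.head_induction_on with
  | refl => exact G.indexBounded_map_inr k w
  | head hturn _ ih =>
    obtain ⟨i, m, hm, hsteps, hexh⟩ := hturn
    exact ih.of_stepsN hexh (hK hm) hsteps

end CDGS

end Index

/-! ### Programmed grammars with entry labels -/

/-- A programmed grammar whose labels form an arbitrary type and whose derivations begin with a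
label from a prescribed set, whereas those of a `PG` begin with any label. -/
structure EntryPG (T Λ : Type) where
  start : ℕ
  entry : Set Λ
  rule : Λ → Rule T
  succ : Λ → Set Λ
  fail : Λ → Set Λ

namespace EntryPG

variable {T Λ : Type} {H : EntryPG T Λ} {N S' : ℕ}

/-- One step of a programmed grammar with entry labels, defined as for a `PG`. -/
def Step (H : EntryPG T Λ) (p q : SForm T × Λ) : Prop :=
  (∃ u v : SForm T, p.1 = u ++ Sum.inl (H.rule p.2).1 :: v ∧
      q.1 = u ++ (H.rule p.2).2 ++ v ∧ q.2 ∈ H.succ p.2) ∨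
  (Sum.inl (H.rule p.2).1 ∉ p.1 ∧ q.1 = p.1 ∧ q.2 ∈ H.fail p.2)

/-- Derivations in which every form after the first has at most `N` nonterminals. -/
def DerivesB (H : EntryPG T Λ) (N : ℕ) : SForm T × Λ → SForm T × Λ → Prop :=
  Relation.ReflTransGen fun p q => H.Step p q ∧ ntCount q.1 ≤ N

lemma derivesB_rewrite {l l' : Λ} {u v x y : SForm T} (hx : x = u ++ Sum.inl (H.rule l).1 :: v)
    (hy : y = u ++ (H.rule l).2 ++ v) (hl : l' ∈ H.succ l) (hN : ntCount y ≤ N) :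
    H.DerivesB N (x, l) (y, l') :=
  .single ⟨Or.inl ⟨u, v, hx, hy, hl⟩, hN⟩

lemma derivesB_skip {l l' : Λ} {x : SForm T} (hx : Sum.inl (H.rule l).1 ∉ x)
    (hl : l' ∈ H.fail l) (hN : ntCount x ≤ N) : H.DerivesB N (x, l) (x, l') :=
  .single ⟨Or.inr ⟨hx, rfl, hl⟩, hN⟩

variable [Finite Λ]

/-- The `PG` with an additional label, coded by `none`, that rewrites the new start symbol `S'` to
the old one and passes control to the entry labels. -/
noncomputable def toPG (H : EntryPG T Λ) (S' : ℕ) : PG T where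
  start := S'
  nLab := Nat.card (Option Λ)
  rule a := ((Finite.equivFin (Option Λ)).symm a).elim (S', [Sum.inl H.start]) H.rule
  succ a := (fun l => Finite.equivFin (Option Λ) (some l)) ''
    ((Finite.equivFin (Option Λ)).symm a).elim H.entry H.succ
  fail a := (fun l => Finite.equivFin (Option Λ) (some l)) ''
    ((Finite.equivFin (Option Λ)).symm a).elim ∅ H.fail

/-- The labels of `H.toPG S'`, with `none` standing for the additional one. -/
noncomputable def label (H : EntryPG T Λ) (S' : ℕ) : Option Λ ≃ Fin (H.toPG S').nLab :=
  Finite.equivFin (Option Λ)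

lemma toPG_rule_label (o : Option Λ) :
    (H.toPG S').rule (H.label S' o) = o.elim (S', [Sum.inl H.start]) H.rule :=
  congrArg (fun o : Option Λ => o.elim (S', [Sum.inl H.start]) H.rule)
    ((H.label S').symm_apply_apply o)

lemma mem_toPG_succ_label (o o' : Option Λ) :
    H.label S' o' ∈ (H.toPG S').succ (H.label S' o) ↔
      ∃ l ∈ o.elim H.entry H.succ, o' = some l := by
  have hsucc : (H.toPG S').succ (H.label S' o) =
      (fun l => H.label S' (some l)) '' o.elim H.entry H.succ :=
    congrArg (fun o : Option Λ => (fun l => H.label S' (some l)) '' o.elim H.entry H.succ)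
      ((H.label S').symm_apply_apply o)
  simp [hsucc, eq_comm]

lemma mem_toPG_fail_label (o o' : Option Λ) :
    H.label S' o' ∈ (H.toPG S').fail (H.label S' o) ↔
      ∃ l ∈ o.elim ∅ H.fail, o' = some l := by
  have hfail : (H.toPG S').fail (H.label S' o) =
      (fun l => H.label S' (some l)) '' o.elim ∅ H.fail :=
    congrArg (fun o : Option Λ => (fun l => H.label S' (some l)) '' o.elim ∅ H.fail)
      ((H.label S').symm_apply_apply o)
  simp [hfail, eq_comm]

lemma toPG_pStep_label_some_iff {x y : SForm T} {l : Λ} {o : Option Λ} :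
    (H.toPG S').PStep (x, H.label S' (some l)) (y, H.label S' o) ↔
      ∃ l', o = some l' ∧ H.Step (x, l) (y, l') := by
  simp only [PG.PStep, Step, toPG_rule_label, mem_toPG_succ_label, mem_toPG_fail_label,
    Option.elim_some]
  constructor
  · rintro (⟨u, v, hx, hy, l', hl', rfl⟩ | ⟨hx, hy, l', hl', rfl⟩)
    exacts [⟨l', rfl, Or.inl ⟨u, v, hx, hy, hl'⟩⟩, ⟨l', rfl, Or.inr ⟨hx, hy, hl'⟩⟩]
  · rintro ⟨l', rfl, ⟨u, v, hx, hy, hl'⟩ | ⟨hx, hy, hl'⟩⟩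
    exacts [Or.inl ⟨u, v, hx, hy, l', hl', rfl⟩, Or.inr ⟨hx, hy, l', hl', rfl⟩]

lemma toPG_pStep_label_none_iff {y : SForm T} {o : Option Λ} :
    (H.toPG S').PStep ([Sum.inl S'], H.label S' none) (y, H.label S' o) ↔
      y = [Sum.inl H.start] ∧ ∃ l ∈ H.entry, o = some l := by
  simp [PG.PStep, toPG_rule_label, mem_toPG_succ_label, mem_toPG_fail_label,
    List.singleton_eq_append_iff]

lemma toPG_pStep_of_start {y : SForm T} {o o' : Option Λ} (hS' : ∀ l, (H.rule l).1 ≠ S')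
    (h : (H.toPG S').PStep ([Sum.inl S'], H.label S' o) (y, H.label S' o')) :
    y = [Sum.inl S'] ∨ y = [Sum.inl H.start] ∧ ∃ l ∈ H.entry, o' = some l := by
  cases o with
  | none => exact Or.inr (toPG_pStep_label_none_iff.1 h)
  | some l =>
    obtain ⟨l', rfl, ⟨u, v, hx, -, -⟩ | ⟨-, hy, -⟩⟩ := toPG_pStep_label_some_iff.1 h
    · change [Sum.inl S'] = u ++ Sum.inl (H.rule l).1 :: v at hx
      have hmem : Sum.inl (H.rule l).1 ∈ ([Sum.inl S'] : SForm T) := by rw [hx]; simp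
      exact absurd (by simpa using hmem) (hS' l)
    · exact Or.inl hy

lemma exists_derivation_of_mem_lang_toPG (hS' : ∀ l, (H.rule l).1 ≠ S') {w : List T}
    (hw : w ∈ (H.toPG S').lang) :
    ∃ l ∈ H.entry, ∃ l',
      Relation.ReflTransGen H.Step ([Sum.inl H.start], l) (w.map Sum.inr, l') := by
  obtain ⟨a, b, h⟩ := hw
  have key : ∀ q, Relation.ReflTransGen (H.toPG S').PStep ([Sum.inl S'], a) q →
      q.1 = [Sum.inl S'] ∨ ∃ l ∈ H.entry, ∃ l', q.2 = H.label S' (some l') ∧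
        Relation.ReflTransGen H.Step ([Sum.inl H.start], l) (q.1, l') := by
    intro q hq
    induction hq with
    | refl => exact Or.inl rfl
    | @tail p q _ hpq ih =>
      obtain ⟨x, a⟩ := p
      obtain ⟨y, b⟩ := q
      obtain ⟨o', rfl⟩ := (H.label S').surjective b
      rcases ih with hx | ⟨l, hl, l₁, ha, hreach⟩
      · obtain ⟨o, rfl⟩ := (H.label S').surjective a
        obtain rfl : x = [Sum.inl S'] := hx
        refine (toPG_pStep_of_start hS' hpq).imp_right ?_
        rintro ⟨rfl, l, hl, rfl⟩
        exact ⟨l, hl, l, rfl, .refl⟩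
      · obtain rfl : a = H.label S' (some l₁) := ha
        obtain ⟨l₂, rfl, hstep⟩ := toPG_pStep_label_some_iff.1 hpq
        exact Or.inr ⟨l, hl, l₂, rfl, hreach.tail hstep⟩
  rcases key _ h with hw | ⟨l, hl, l', -, hreach⟩
  · cases w <;> simp at hw
  · exact ⟨l, hl, l', hreach⟩

lemma mem_langB_toPG {w : List T} {l l' : Λ} (hN : 1 ≤ N) (hl : l ∈ H.entry)
    (h : H.DerivesB N ([Sum.inl H.start], l) (w.map Sum.inr, l')) :
    w ∈ (H.toPG S').langB N := by
  have hstart (A : ℕ) : ntCount ([Sum.inl A] : SForm T) ≤ N := hN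
  refine ⟨H.label S' none, H.label S' (some l'), hstart S', ?_⟩
  refine .head (b := ([Sum.inl H.start], H.label S' (some l)))
    ⟨toPG_pStep_label_none_iff.2 ⟨rfl, l, hl, rfl⟩, hstart H.start⟩ ?_
  exact Relation.ReflTransGen.lift (fun p : SForm T × Λ => (p.1, H.label S' (some p.2)))
    (fun p q hpq => ⟨toPG_pStep_label_some_iff.2 ⟨q.2, rfl, hpq.1⟩, hpq.2⟩) _ _ h

lemma toPG_lamFree (h : ∀ l, (H.rule l).2 ≠ []) : (H.toPG S').LamFree := by
  intro a
  obtain ⟨o, rfl⟩ := (H.label S').surjective a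
  rw [toPG_rule_label]
  cases o with
  | none => simp
  | some l => exact h l

end EntryPG

lemma PG.langB_subset_lang {T : Type} (H : PG T) (N : ℕ) : H.langB N ⊆ H.lang := by
  rintro w ⟨a, b, -, h⟩
  exact ⟨a, b, Relation.ReflTransGen.mono (fun _ _ hpq => hpq.1) _ _ h⟩

/-! ### The simulating grammar -/

section Simulation

variable {T : Type}

/-- The rule at position `c` of a component. Written `(G.comp i)[c]`, it would be rewritten by
`simp` into a form with a natural number as its index. -/
def CDGS.ruleAt (G : CDGS T) {i : Fin G.deg} (c : Fin (G.comp i).length) : Rule T := (G.comp i)[c]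

/-- The labels of the simulation of turns of length at most `k`. The rule at position `c` of
component `i` is carried out by `mark`, an optional `test` for the left-hand side of the rule at
position `c'`, and `apply`; the number `r` counts the steps of the turn that remain afterwards. The
labels `check` carry out the appearance checking. -/
inductive SimLabel (G : CDGS T) (k : ℕ)
  | mark (i : Fin G.deg) (c : Fin (G.comp i).length) (r : Fin k)
  | test (i : Fin G.deg) (c : Fin (G.comp i).length) (r : Fin k) (c' : Fin (G.comp i).length)
  | apply (i : Fin G.deg) (c : Fin (G.comp i).length) (r : Fin k)
  | check (i : Fin G.deg) (c : Fin (G.comp i).length)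

namespace SimLabel

variable {G : CDGS T} {K : Set ℕ} {k : ℕ}

instance : Finite (SimLabel G k) :=
  Finite.of_surjective
    (Sum.elim (fun p => mark p.1 p.2.1 p.2.2) <|
      Sum.elim (fun p => test p.1 p.2.1 p.2.2.1 p.2.2.2) <|
      Sum.elim (fun p => apply p.1 p.2.1 p.2.2) fun p => check p.1 p.2 :
      (Σ i : Fin G.deg, Fin (G.comp i).length × Fin k) ⊕
      (Σ i : Fin G.deg, Fin (G.comp i).length × Fin k × Fin (G.comp i).length) ⊕
      (Σ i : Fin G.deg, Fin (G.comp i).length × Fin k) ⊕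
      (Σ i : Fin G.deg, Fin (G.comp i).length) → SimLabel G k) <| by
    rintro (⟨i, c, r⟩ | ⟨i, c, r, c'⟩ | ⟨i, c, r⟩ | ⟨i, c⟩)
    exacts [⟨.inl ⟨i, c, r⟩, rfl⟩, ⟨.inr (.inl ⟨i, c, r, c'⟩), rfl⟩,
      ⟨.inr (.inr (.inl ⟨i, c, r⟩)), rfl⟩, ⟨.inr (.inr (.inr ⟨i, c⟩)), rfl⟩]

/-- The labels that begin a turn whose length lies in `K`. -/
inductive IsEntry (K : Set ℕ) : SimLabel G k → Prop
  | mark {i c r} : r.val + 1 ∈ K → IsEntry K (mark i c r)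

/-- The success relation of the simulation. Only the last step of a turn, or one whose right-hand
side contains a nonterminal, may omit the `test`. -/
inductive Succ : SimLabel G k → SimLabel G k → Prop
  | mark_test {i c r c'} : Succ (mark i c r) (test i c r c')
  | mark_apply {i c r} : (r.val = 0 ∨ ∃ A, Sum.inl A ∈ (G.ruleAt c).2) →
      Succ (mark i c r) (apply i c r)
  | test_apply {i c r c'} : Succ (test i c r c') (apply i c r)
  | apply_mark {i c r c' r'} : r'.val + 1 = r.val → Succ (apply i c r) (mark i c' r')
  | apply_check {i c r c'} : r.val = 0 → c'.val = 0 → Succ (apply i c r) (check i c')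

/-- The failure relation of the simulation: the `check` labels of a component succeed one another,
and the last one leads to the next turn. -/
inductive Fail (K : Set ℕ) : SimLabel G k → SimLabel G k → Prop
  | check_check {i c c'} : c'.val = c.val + 1 → Fail K (check i c) (check i c')
  | check_entry {i c l} : c.val + 1 = (G.comp i).length → IsEntry K l → Fail K (check i c) l

/-- The rule of a label, with marker `M`. The rules of `test` and `check` only test for a left-hand
side. -/
def rule (M : ℕ) : SimLabel G k → Rule T
  | mark _ c _ => ((G.ruleAt c).1, [Sum.inl M])
  | test _ _ _ c' => ((G.ruleAt c').1, [Sum.inl (G.ruleAt c').1])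
  | apply _ c _ => (M, (G.ruleAt c).2)
  | check _ c => ((G.ruleAt c).1, [Sum.inl (G.ruleAt c).1])

end SimLabel

open SimLabel

namespace CDGS

variable {G : CDGS T} {K : Set ℕ} {k M N : ℕ} {i : Fin G.deg} {u v x y : SForm T}
  {c c' : Fin (G.comp i).length} {r r' : Fin k}

lemma ruleAt_mem (c : Fin (G.comp i).length) : G.ruleAt c ∈ G.comp i := List.getElem_mem _

lemma exists_ruleAt_eq {ρ : Rule T} (hρ : ρ ∈ G.comp i) :
    ∃ c : Fin (G.comp i).length, G.ruleAt c = ρ := by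
  obtain ⟨c, hc, hcρ⟩ := List.getElem_of_mem hρ
  exact ⟨⟨c, hc⟩, hcρ⟩

/-- The programmed grammar that simulates the turns of `G` whose length lies in `K`. -/
def simulation (G : CDGS T) (K : Set ℕ) (k M : ℕ) : EntryPG T (SimLabel G k) where
  start := G.start
  entry := {l | l.IsEntry K}
  rule := SimLabel.rule M
  succ l := {l' | l.Succ l'}
  fail l := {l' | l.Fail K l'}

/-- The nonterminals occurring in the description of `G`. -/
def nonterminals (G : CDGS T) : Set ℕ :=
  {G.start} ∪ ⋃ i, ⋃ c : Fin (G.comp i).length,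
    {(G.ruleAt c).1} ∪ {A | Sum.inl A ∈ (G.ruleAt c).2}

lemma finite_nonterminals (G : CDGS T) : G.nonterminals.Finite := by
  refine (Set.finite_singleton _).union (Set.finite_iUnion fun i => Set.finite_iUnion fun c => ?_)
  exact (Set.finite_singleton _).union
    ((List.finite_toSet (G.ruleAt c).2).preimage Sum.inl_injective.injOn)

lemma start_mem_nonterminals (G : CDGS T) : G.start ∈ G.nonterminals := Or.inl rfl

lemma lhs_mem_nonterminals (c : Fin (G.comp i).length) : (G.ruleAt c).1 ∈ G.nonterminals :=
  Or.inr (Set.mem_iUnion₂.2 ⟨i, c, Or.inl rfl⟩)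

lemma notMem_rhs_of_notMem_nonterminals (hM : M ∉ G.nonterminals) (c : Fin (G.comp i).length) :
    Sum.inl M ∉ (G.ruleAt c).2 := fun h =>
  hM (Or.inr (Set.mem_iUnion₂.2 ⟨i, c, Or.inr h⟩))

lemma simulation_lhs_ne {S' : ℕ} (hS' : S' ∉ insert M G.nonterminals) (l : SimLabel G k) :
    ((G.simulation K k M).rule l).1 ≠ S' := by
  rintro rfl
  cases l with
  | apply i c r => exact hS' (Set.mem_insert _ _)
  | _ => exact hS' (Set.mem_insert_of_mem _ (lhs_mem_nonterminals _))

lemma LamFree.simulation (h : G.LamFree) (l : SimLabel G k) :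
    ((G.simulation K k M).rule l).2 ≠ [] := by
  cases l with
  | apply i c r => exact h i (G.ruleAt c) (ruleAt_mem c)
  | _ => exact List.cons_ne_nil _ _

lemma rStep_apply (c : Fin (G.comp i).length) (u v : SForm T) :
    RStep (G.comp i) (u ++ Sum.inl (G.ruleAt c).1 :: v) (u ++ (G.ruleAt c).2 ++ v) :=
  ⟨_, ruleAt_mem c, u, v, rfl, rfl⟩

lemma exhausted_comp_iff :
    Exhausted (G.comp i) x ↔ ∀ c : Fin (G.comp i).length, Sum.inl (G.ruleAt c).1 ∉ x := by
  refine ⟨fun h c => h _ (ruleAt_mem c), fun h r hr => ?_⟩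
  obtain ⟨c, rfl⟩ := exists_ruleAt_eq hr
  exact h c

/-! #### Soundness -/

/-- The invariant that the simulation maintains. Among the forms of a turn under way, only the
result can be a terminal word. -/
def SimInvariant (G : CDGS T) (K : Set ℕ) (k M : ℕ) : SForm T × SimLabel G k → Prop
  | (x, mark i _ r) => Sum.inl M ∉ x ∧ G.MidTurn K i (r + 1) x ∧
      (G.Reachable K x ∨ ∃ A, Sum.inl A ∈ x)
  | (x, test i c r _) => ∃ u v, x = u ++ Sum.inl M :: v ∧
      Sum.inl M ∉ u ++ v ∧ G.MidTurn K i (r + 1) (u ++ Sum.inl (G.ruleAt c).1 :: v)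
  | (x, apply i c r) => ∃ u v, x = u ++ Sum.inl M :: v ∧
      Sum.inl M ∉ u ++ v ∧ G.MidTurn K i (r + 1) (u ++ Sum.inl (G.ruleAt c).1 :: v) ∧
      (r.val = 0 ∨ ∃ A, Sum.inl A ∈ u ++ (G.ruleAt c).2 ++ v)
  | (x, check i c) => Sum.inl M ∉ x ∧ G.MidTurn K i 0 x ∧
      ∀ c' < c, Sum.inl (G.ruleAt c').1 ∉ x

namespace SimInvariant

lemma of_isEntry (hM : Sum.inl M ∉ x) (hx : G.Reachable K x) {l : SimLabel G k}
    (hl : l.IsEntry K) : G.SimInvariant K k M (x, l) := by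
  obtain ⟨hr⟩ := hl
  exact ⟨hM, hx.midTurn _ hr, Or.inl hx⟩

lemma mark_test (h : G.SimInvariant K k M (u ++ Sum.inl (G.ruleAt c).1 :: v, mark i c r)) :
    G.SimInvariant K k M (u ++ [Sum.inl M] ++ v, test i c r c') := by
  obtain ⟨hMx, hturn, -⟩ := h
  exact ⟨u, v, by simp, by simp_all, hturn⟩

lemma mark_apply (h : G.SimInvariant K k M (u ++ Sum.inl (G.ruleAt c).1 :: v, mark i c r))
    (hr : r.val = 0 ∨ ∃ A, Sum.inl A ∈ (G.ruleAt c).2) :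
    G.SimInvariant K k M (u ++ [Sum.inl M] ++ v, apply i c r) := by
  obtain ⟨hMx, hturn, -⟩ := h
  refine ⟨u, v, by simp, by simp_all, hturn, hr.imp_right ?_⟩
  rintro ⟨A, hA⟩
  exact ⟨A, by simp [hA]⟩

lemma test_apply (hM : M ∉ G.nonterminals)
    (h : G.SimInvariant K k M (x, test i c r c')) (hx : Sum.inl (G.ruleAt c').1 ∈ x) :
    G.SimInvariant K k M (x, apply i c r) := by
  obtain ⟨u, v, rfl, hMuv, hturn⟩ := h
  have hne : (G.ruleAt c').1 ≠ M := ne_of_mem_of_not_mem (lhs_mem_nonterminals c') hM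
  refine ⟨u, v, rfl, hMuv, hturn, Or.inr ⟨(G.ruleAt c').1, ?_⟩⟩
  simp only [List.mem_append, List.mem_cons, Sum.inl.injEq, hne, false_or] at hx ⊢
  tauto

/-- The marker occurs only once, so `apply` rewrites the occurrence chosen by `mark`. -/
lemma midTurn_of_apply (hM : M ∉ G.nonterminals)
    (h : G.SimInvariant K k M (u ++ Sum.inl M :: v, apply i c r)) :
    Sum.inl M ∉ u ++ (G.ruleAt c).2 ++ v ∧ G.MidTurn K i r (u ++ (G.ruleAt c).2 ++ v) ∧
      (r.val = 0 ∨ ∃ A, Sum.inl A ∈ u ++ (G.ruleAt c).2 ++ v) := by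
  obtain ⟨u', v', hx, hMuv, hturn, hr⟩ := h
  rw [List.mem_append, not_or] at hMuv
  obtain ⟨rfl, -, rfl⟩ := (List.append_cons_inj_of_notMem hMuv.1 hMuv.2).1 hx.symm
  refine ⟨?_, hturn.step (rStep_apply c _ _), hr⟩
  simp [hMuv.1, hMuv.2, notMem_rhs_of_notMem_nonterminals hM c]

lemma apply_mark (hM : M ∉ G.nonterminals)
    (h : G.SimInvariant K k M (u ++ Sum.inl M :: v, apply i c r)) (hr : r'.val + 1 = r.val) :
    G.SimInvariant K k M (u ++ (G.ruleAt c).2 ++ v, mark i c' r') := by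
  obtain ⟨hMx, hturn, hnt⟩ := h.midTurn_of_apply hM
  exact ⟨hMx, hr ▸ hturn, Or.inr (hnt.resolve_left (by omega))⟩

lemma apply_check (hM : M ∉ G.nonterminals)
    (h : G.SimInvariant K k M (u ++ Sum.inl M :: v, apply i c r)) (hr : r.val = 0)
    (hc' : c'.val = 0) :
    G.SimInvariant K k M (u ++ (G.ruleAt c).2 ++ v, check i c') := by
  obtain ⟨hMx, hturn, -⟩ := h.midTurn_of_apply hM
  exact ⟨hMx, hr ▸ hturn, fun c'' hlt => absurd hlt (by simp [Fin.lt_def, hc'])⟩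

lemma check_check (h : G.SimInvariant K k M (x, check i c)) (hx : Sum.inl (G.ruleAt c).1 ∉ x)
    (hc' : c'.val = c.val + 1) : G.SimInvariant K k M (x, check i c') := by
  obtain ⟨hMx, hturn, hlt⟩ := h
  refine ⟨hMx, hturn, fun c'' hc'' => ?_⟩
  rcases (show c'' ≤ c by simp only [Fin.lt_def, Fin.le_def] at hc'' ⊢; omega).lt_or_eq with h | rfl
  exacts [hlt c'' h, hx]

lemma check_entry (h : G.SimInvariant K k M (x, check i c)) (hx : Sum.inl (G.ruleAt c).1 ∉ x)
    (hc : c.val + 1 = (G.comp i).length) {l : SimLabel G k} (hl : l.IsEntry K) :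
    G.SimInvariant K k M (x, l) := by
  obtain ⟨hMx, hturn, hlt⟩ := h
  refine of_isEntry hMx (hturn.reachable (exhausted_comp_iff.2 fun c' => ?_)) hl
  rcases (show c' ≤ c by rw [Fin.le_def]; omega).lt_or_eq with h | rfl
  exacts [hlt c' h, hx]

lemma step (hM : M ∉ G.nonterminals) {p q : SForm T × SimLabel G k}
    (h : G.SimInvariant K k M p) (hpq : (G.simulation K k M).Step p q) :
    G.SimInvariant K k M q := by
  obtain ⟨x, l⟩ := p
  obtain ⟨y, l'⟩ := q
  rcases hpq with ⟨u, v, hx, hy, hl⟩ | ⟨hx, hy, hl⟩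
  · obtain rfl : x = u ++ Sum.inl (SimLabel.rule M l).1 :: v := hx
    obtain rfl : y = u ++ (SimLabel.rule M l).2 ++ v := hy
    cases (show l.Succ l' from hl) with
    | mark_test => exact h.mark_test
    | mark_apply hr => exact h.mark_apply hr
    | @test_apply i c r c' =>
      rw [List.append_assoc]
      exact h.test_apply hM (by simp [SimLabel.rule])
    | apply_mark hr => exact h.apply_mark hM hr
    | apply_check hr hc' => exact h.apply_check hM hr hc'
  · obtain rfl : y = x := hy
    cases (show l.Fail K l' from hl) with
    | check_check hc' => exact h.check_check hx hc'
    | check_entry hc hl => exact h.check_entry hx hc hl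

lemma reachable_of_map_inr {w : List T} {l : SimLabel G k}
    (h : G.SimInvariant K k M (w.map Sum.inr, l)) : G.Reachable K (w.map Sum.inr) := by
  have hno (A : ℕ) : (Sum.inl A : Symb T) ∉ (w.map Sum.inr : SForm T) := by simp
  have hmarker {u v : SForm T} : w.map Sum.inr ≠ u ++ Sum.inl M :: v := fun h =>
    hno M (by rw [h]; simp)
  cases l with
  | mark i c r => exact h.2.2.resolve_right fun ⟨A, hA⟩ => hno A hA
  | test i c r c' =>
    obtain ⟨u, v, hx, -⟩ := h
    exact absurd hx hmarker
  | apply i c r =>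
    obtain ⟨u, v, hx, -⟩ := h
    exact absurd hx hmarker
  | check i c => exact h.2.1.reachable fun r _ => hno r.1

end SimInvariant

lemma reachable_of_simulation (hM : M ∉ G.nonterminals) {w : List T} {l l' : SimLabel G k}
    (hl : l ∈ (G.simulation K k M).entry)
    (h : Relation.ReflTransGen (G.simulation K k M).Step ([Sum.inl G.start], l)
      (w.map Sum.inr, l')) : G.Reachable K (w.map Sum.inr) := by
  have hstart : Sum.inl M ∉ ([Sum.inl G.start] : SForm T) := by
    simpa using (ne_of_mem_of_not_mem G.start_mem_nonterminals hM).symm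
  have hinv (q) (hq : Relation.ReflTransGen (G.simulation K k M).Step ([Sum.inl G.start], l) q) :
      G.SimInvariant K k M q := by
    induction hq with
    | refl => exact .of_isEntry hstart .refl hl
    | tail _ hstep ih => exact ih.step hM hstep
  exact (hinv _ h).reachable_of_map_inr

/-! #### Completeness -/

lemma simulation_mark_apply (hN : ntCount (u ++ Sum.inl (G.ruleAt c).1 :: v) ≤ N)
    (hr : r.val = 0 ∨ ∃ c' : Fin (G.comp i).length,
      Sum.inl (G.ruleAt c').1 ∈ u ++ (G.ruleAt c).2 ++ v) :
    (G.simulation K k M).DerivesB N (u ++ Sum.inl (G.ruleAt c).1 :: v, mark i c r)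
      (u ++ Sum.inl M :: v, apply i c r) := by
  rw [ntCount_replace _ M] at hN
  have hmarked : u ++ Sum.inl M :: v = u ++ [Sum.inl M] ++ v := by simp
  by_cases hdirect : r.val = 0 ∨ ∃ A, Sum.inl A ∈ (G.ruleAt c).2
  · exact EntryPG.derivesB_rewrite rfl hmarked (Succ.mark_apply hdirect) hN
  obtain ⟨hr0, hrhs⟩ := not_or.1 hdirect
  obtain ⟨c', hc'⟩ := hr.resolve_left hr0
  have hmem : Sum.inl (G.ruleAt c').1 ∈ u ++ Sum.inl M :: v := by
    have := not_exists.1 hrhs (G.ruleAt c').1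
    simp only [List.mem_append, List.mem_cons] at hc' ⊢
    tauto
  obtain ⟨u', v', hsplit⟩ := List.append_of_mem hmem
  have htest : (G.simulation K k M).DerivesB N (u ++ Sum.inl M :: v, test i c r c')
      (u ++ Sum.inl M :: v, apply i c r) :=
    EntryPG.derivesB_rewrite hsplit (by simp [hsplit, simulation, SimLabel.rule])
      Succ.test_apply hN
  exact .trans (EntryPG.derivesB_rewrite rfl hmarked Succ.mark_test hN) htest

lemma simulation_checks (hexh : Exhausted (G.comp i) y) (hN : ntCount y ≤ N)
    (h0 : c'.val = 0) (c : Fin (G.comp i).length) :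
    (G.simulation K k M).DerivesB N (y, check i c') (y, check i c) := by
  obtain ⟨c, hc⟩ := c
  induction c with
  | zero =>
    obtain rfl : c' = ⟨0, hc⟩ := Fin.ext h0
    exact .refl
  | succ c ih =>
    exact (ih (Nat.lt_of_succ_lt hc)).trans
      (EntryPG.derivesB_skip (exhausted_comp_iff.1 hexh _) (Fail.check_check rfl) hN)

lemma simulation_steps (hN : ∀ m ≤ k, ∀ z, StepsN (G.comp i) m z y → ntCount z ≤ N)
    (h0 : c'.val = 0) {r : ℕ} (hr : r < k) (hsteps : StepsN (G.comp i) (r + 1) x y) :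
    ∃ c : Fin (G.comp i).length, Sum.inl (G.ruleAt c).1 ∈ x ∧
      (G.simulation K k M).DerivesB N (x, mark i c ⟨r, hr⟩) (y, check i c') := by
  induction r generalizing x with
  | zero =>
    have hx := hN 1 hr x hsteps
    obtain ⟨z, ⟨ρ, hρ, u, v, rfl, rfl⟩, rfl⟩ := hsteps
    obtain ⟨c, rfl⟩ := exists_ruleAt_eq hρ
    refine ⟨c, by simp, (simulation_mark_apply hx (Or.inl rfl)).trans ?_⟩
    exact EntryPG.derivesB_rewrite rfl rfl (Succ.apply_check rfl h0) (hN 0 k.zero_le _ rfl)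
  | succ r ih =>
    have hx := hN (r + 2) hr x hsteps
    obtain ⟨z, ⟨ρ, hρ, u, v, rfl, rfl⟩, hsteps⟩ := hsteps
    obtain ⟨c, rfl⟩ := exists_ruleAt_eq hρ
    have hz := hN (r + 1) (Nat.le_of_succ_le hr) _ hsteps
    obtain ⟨c₁, hmem, hrest⟩ := ih (Nat.lt_of_succ_lt hr) hsteps
    refine ⟨c, by simp, (simulation_mark_apply hx (Or.inr ⟨c₁, hmem⟩)).trans <| .trans ?_ hrest⟩
    exact EntryPG.derivesB_rewrite rfl rfl (Succ.apply_mark rfl) hz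

lemma exists_simulation_turn (hN : ∀ m ≤ k, ∀ z, StepsN (G.comp i) m z y → ntCount z ≤ N)
    (hexh : Exhausted (G.comp i) y) {r : ℕ} (hr : r < k)
    (hsteps : StepsN (G.comp i) (r + 1) x y) :
    ∃ c c' : Fin (G.comp i).length, c'.val + 1 = (G.comp i).length ∧
      (G.simulation K k M).DerivesB N (x, mark i c ⟨r, hr⟩) (y, check i c') := by
  have hlen : 0 < (G.comp i).length := by
    obtain ⟨z, ⟨ρ, hρ, -⟩, -⟩ := hsteps
    exact List.length_pos_of_mem hρ
  obtain ⟨c, -, hturn⟩ := simulation_steps (c' := ⟨0, hlen⟩) hN rfl hr hsteps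
  exact ⟨c, ⟨(G.comp i).length - 1, Nat.sub_one_lt_of_lt hlen⟩, Nat.sub_add_cancel hlen,
    hturn.trans (simulation_checks hexh (hN 0 k.zero_le _ rfl) rfl _)⟩

lemma exists_simulation_of_derives (hK : K ⊆ Set.Iic k) (hN : G.deg * k ≤ N) {w : List T}
    (h : Relation.ReflTransGen (G.Turn K) x (w.map Sum.inr)) :
    x = w.map Sum.inr ∨ ∃ l ∈ (G.simulation K k M).entry, ∃ l',
      (G.simulation K k M).DerivesB N (x, l) (w.map Sum.inr, l') := by
  induction h using Relation.ReflTransGen.head_induction_on with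
  | refl => exact Or.inl rfl
  | @head x y hturn hrest ih =>
    obtain ⟨i, m, hm, hsteps, hexh⟩ := hturn
    have hy := indexBounded_of_derives hK hrest
    have hbound (m) (hm : m ≤ k) (z) (hz : StepsN (G.comp i) m z y) : ntCount z ≤ N :=
      (hy.of_stepsN hexh hm hz).ntCount_le.trans hN
    rcases m with - | r
    · obtain rfl : x = y := hsteps
      exact ih
    obtain ⟨c, c', hc', hturn⟩ :=
      exists_simulation_turn (K := K) (M := M) hbound hexh (hK hm) hsteps
    refine Or.inr ⟨mark i c ⟨r, hK hm⟩, .mark hm, ?_⟩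
    rcases ih with rfl | ⟨l, hl, l', hrest⟩
    · exact ⟨check i c', hturn⟩
    · exact ⟨l', (hturn.trans (EntryPG.derivesB_skip (exhausted_comp_iff.1 hexh c')
        (Fail.check_entry hc' hl) (hy.ntCount_le.trans hN))).trans hrest⟩

/-! #### The simulated language -/

variable {g : Mode} {S' : ℕ}

lemma lang_simulation_subset (hM : M ∉ G.nonterminals) (hS' : S' ∉ insert M G.nonterminals) :
    ((G.simulation g.lengths k M).toPG S').lang ⊆ G.lang (.conj .t g) := by
  intro w hw
  obtain ⟨l, hl, l', h⟩ := EntryPG.exists_derivation_of_mem_lang_toPG (simulation_lhs_ne hS') hw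
  exact mem_lang_conj_t_iff.2 (reachable_of_simulation hM hl h)

lemma lang_subset_langB_simulation (hg : g.lengths ⊆ Set.Iic k) (hN : G.deg * k ≤ N) :
    G.lang (.conj .t g) ⊆ ((G.simulation g.lengths k M).toPG S').langB N := by
  intro w hw
  have hreach : G.Reachable g.lengths (w.map Sum.inr) := mem_lang_conj_t_iff.1 hw
  have h1 : 1 ≤ N := (indexBounded_of_derives hg hreach).ntCount_le.trans hN
  rcases exists_simulation_of_derives (M := M) hg hN hreach with hw | ⟨l, hl, l', h⟩
  · cases w <;> simp at hw
  · exact EntryPG.mem_langB_toPG h1 hl h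

end CDGS

end Simulation

theorem stmt6_general {T : Type} (lf : Bool) (n k : ℕ) (g : Mode) (hg : g.lengths ⊆ Set.Iic k) :
    CDFam T lf n (.conj .t g) ⊆ PFamInd T lf true (n * k) := by
  rintro L ⟨G, hdeg, hlf, hL⟩
  obtain ⟨M, hM⟩ := G.finite_nonterminals.exists_notMem
  obtain ⟨S', hS'⟩ := (G.finite_nonterminals.insert M).exists_notMem
  let H := (G.simulation g.lengths k M).toPG S'
  have hsound : H.lang ⊆ G.lang (.conj .t g) := CDGS.lang_simulation_subset hM hS'
  have hcomplete : G.lang (.conj .t g) ⊆ H.langB (n * k) :=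
    CDGS.lang_subset_langB_simulation hg (Nat.mul_le_mul_right k hdeg)
  have hlang : H.lang = G.lang (.conj .t g) :=
    hsound.antisymm (hcomplete.trans (H.langB_subset_lang _))
  exact ⟨H, fun h => EntryPG.toPG_lamFree (hlf h).simulation, nofun, hlang ▸ hL,
    hsound.trans hcomplete⟩

/-- For all n, k ∈ ℕ (positive) and every Δ ∈ {≤, =},
L(CD_n, CF[−λ], (t∧Δk)) ⊆ L_{n·k}(P, CF[−λ], ac), both with and without
erasing rules. -/
theorem stmt6 (lf : Bool) (n k : ℕ) (hn : 1 ≤ n) (hk : 1 ≤ k) (d : ℕ → Mode)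
    (hd : d = Mode.le ∨ d = Mode.eq) :
    CDFam ℕ lf n (Mode.conj Mode.t (d k)) ⊆ PFamInd ℕ lf true (n * k) := by
  rcases hd with rfl | rfl
  exacts [stmt6_general lf n k _ subset_rfl, stmt6_general lf n k _ (by simp [Mode.lengths])]

end CDHybrid
end

section
/- For all n, k ∈ ℕ, the language S_{n·k} = { b(aⁱb)^{2·n·k} | i ≥ 1 } over {a,b} belongs to L(CD_{2n+1}, CF−λ, (t∧≤k+1)), i.e., it can be generated by a CD grammar system with 2n+1 λ-free context-free components working in the (t∧≤k+1)-mode. -/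
namespace CDHybrid

/-- The word b(aⁱb)^{2m}, where a is encoded as 0 and b as 1. -/
def sepWord (m i : ℕ) : List ℕ :=
  1 :: (List.replicate (2 * m) (List.replicate i 0 ++ [1])).flatten

/-- The language S_m = { b(aⁱb)^{2m} | i ≥ 1 } over {a,b}. -/
def sepLang (m : ℕ) : Set (List ℕ) := { w | ∃ i : ℕ, 1 ≤ i ∧ w = sepWord m i }

/-!
A component each of whose rules is either a trap `A → A` or has a right-hand side that it cannot
rewrite further has at most one way to finish in `t`-mode: every derivation that terminates carries
out the parallel replacement `expand`. So it suffices to follow `expand` through the sentential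
forms of a grammar system with such components.

Apart from a leading control symbol, a sentential form consists of `n` groups of `k` equal blocks,
and a block ends up as `aⁱbaⁱb`. Since `A → aAa` would never terminate in `t`-mode, a block grows by
two rewritings, `plain → marked` and then `marked → a plain a`. The control symbol passes through
`2n` workers cyclically, each of them performing one of the two rewritings in a single group, so
that at most `k` block symbols and the control symbol are rewritten at a time. To finish, the
groups are treated one after the other: a worker marks the group and the terminator turns its
marked symbols into `aba`. A component that does not fit the control symbol is blocked by a trap.
-/

theorem mem_of_lookup_eq_some {α β : Type*} [DecidableEq α] {l : List (α × β)} {a : α} {b : β}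
    (h : l.lookup a = some b) : (a, b) ∈ l := by
  obtain ⟨l₁, l₂, rfl, -⟩ := List.lookup_eq_some_iff.1 h
  simp

theorem add_one_mod_eq_ite {a b : ℕ} (h : a < b) :
    (a + 1) % b = if a + 1 = b then 0 else a + 1 := by
  split_ifs with hab
  · rw [hab, Nat.mod_self]
  · exact Nat.mod_eq_of_lt (by omega)

/-! ### Components whose terminating derivations are determined -/

section Expansion

variable {T : Type}

/-- The parallel application of the rule list `P` to a sentential form: every nonterminal with a
rule in `P` is replaced by the right-hand side of its first rule, everything else stays. For a
`Flat` component this is the result of every terminating derivation. -/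
def expand (P : List (Rule T)) (x : SForm T) : SForm T :=
  x.flatMap (Sum.elim (fun A => (P.lookup A).getD [Sum.inl A]) fun a => [Sum.inr a])

/-- The number of occurrences in a sentential form of nonterminals that `P` can rewrite. -/
def activeCount (P : List (Rule T)) (x : SForm T) : ℕ :=
  x.countP (Sum.elim (fun A => (P.lookup A).isSome) fun _ => false)

/-- A component with at most one rule per nonterminal, each rule being either a trap `A → A`, which
keeps derivations in `t`-mode from terminating, or having a right-hand side without nonterminals
that the component can rewrite. -/
structure Flat (P : List (Rule T)) : Prop where
  lookup_eq : ∀ r ∈ P, P.lookup r.1 = some r.2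
  trap_or_inactive : ∀ r ∈ P, r.2 = [Sum.inl r.1] ∨ activeCount P r.2 = 0

variable {P : List (Rule T)} {x y : SForm T}

theorem expand_append (P : List (Rule T)) (x y : SForm T) :
    expand P (x ++ y) = expand P x ++ expand P y :=
  List.flatMap_append

theorem expand_cons (P : List (Rule T)) (s : Symb T) (x : SForm T) :
    expand P (s :: x) = expand P [s] ++ expand P x :=
  expand_append P [s] x

theorem activeCount_append (P : List (Rule T)) (x y : SForm T) :
    activeCount P (x ++ y) = activeCount P x + activeCount P y :=
  List.countP_append

theorem activeCount_cons (P : List (Rule T)) (s : Symb T) (x : SForm T) :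
    activeCount P (s :: x) = activeCount P [s] + activeCount P x :=
  activeCount_append P [s] x

theorem expand_flatten (P : List (Rule T)) (l : List (SForm T)) :
    expand P l.flatten = (l.map (expand P)).flatten := by
  induction l with
  | nil => rfl
  | cons x l ih => rw [List.flatten_cons, expand_append, ih, List.map_cons, List.flatten_cons]

theorem activeCount_flatten (P : List (Rule T)) (l : List (SForm T)) :
    activeCount P l.flatten = (l.map (activeCount P)).sum :=
  List.countP_flatten

theorem activeCount_map_inr (P : List (Rule T)) (w : List T) :
    activeCount P (w.map Sum.inr) = 0 := by
  simp [activeCount]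

theorem activeCount_singleton_le_one (P : List (Rule T)) (s : Symb T) : activeCount P [s] ≤ 1 :=
  List.countP_le_length

theorem activeCount_eq_zero_iff :
    activeCount P x = 0 ↔ ∀ A, Sum.inl A ∈ x → P.lookup A = none := by
  simp [activeCount]

theorem expand_eq_self (hx : activeCount P x = 0) : expand P x = x := by
  induction x with
  | nil => rfl
  | cons s x ih =>
    rw [activeCount_cons, Nat.add_eq_zero_iff] at hx
    rw [expand_cons, ih hx.2]
    rcases s with A | a
    · simp [expand, activeCount_eq_zero_iff.1 hx.1 A (by simp)]
    · rfl

theorem expand_map_inr (P : List (Rule T)) (w : List T) :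
    expand P (w.map Sum.inr) = w.map Sum.inr :=
  expand_eq_self (activeCount_map_inr P w)

theorem exists_rStep_iff : (∃ y, RStep P x y) ↔ activeCount P x ≠ 0 := by
  simp only [ne_eq, activeCount_eq_zero_iff, not_forall]
  constructor
  · rintro ⟨_, r, hr, u, v, rfl, -⟩
    exact ⟨r.1, by simp, fun h => by simpa using List.lookup_eq_none_iff.1 h r hr⟩
  · rintro ⟨A, hA, hP⟩
    obtain ⟨z, hz⟩ := Option.ne_none_iff_exists'.1 hP
    obtain ⟨u, v, rfl⟩ := List.append_of_mem hA
    exact ⟨_, (A, z), mem_of_lookup_eq_some hz, u, v, rfl, rfl⟩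

theorem modeOK_t_iff {m : ℕ} : modeOK P .t m y ↔ activeCount P y = 0 := by
  rw [modeOK, exists_rStep_iff, not_not]

theorem StepsN.append_left {m : ℕ} (h : StepsN P m x y) (u : SForm T) :
    StepsN P m (u ++ x) (u ++ y) := by
  induction m generalizing x with
  | zero => exact congrArg (u ++ ·) h
  | succ m ih =>
    obtain ⟨_, ⟨r, hr, v, w, rfl, rfl⟩, hsteps⟩ := h
    exact ⟨_, ⟨r, hr, u ++ v, w, by simp, by simp⟩, ih hsteps⟩

theorem stepsN_expand (P : List (Rule T)) (x : SForm T) :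
    StepsN P (activeCount P x) x (expand P x) := by
  induction x with
  | nil => rfl
  | cons s x ih =>
    rw [activeCount_cons, expand_cons]
    by_cases hs : activeCount P [s] = 0
    · rw [hs, Nat.zero_add, expand_eq_self hs]
      exact ih.append_left [s]
    · obtain ⟨A, hA, hP⟩ : ∃ A, Sum.inl A ∈ [s] ∧ P.lookup A ≠ none := by
        simpa [activeCount_eq_zero_iff] using hs
      obtain rfl := List.mem_singleton.1 hA
      obtain ⟨z, hz⟩ := Option.ne_none_iff_exists'.1 hP
      have hcount : activeCount P [Sum.inl A] = 1 := by simp [activeCount, hz]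
      have hexpand : expand P [Sum.inl A] = z := by simp [expand, hz]
      rw [hcount, hexpand, Nat.add_comm]
      exact ⟨z ++ x, ⟨(A, z), mem_of_lookup_eq_some hz, [], x, rfl, rfl⟩, ih.append_left z⟩

theorem Flat.expand_snd (hP : Flat P) {r : Rule T} (hr : r ∈ P) : expand P r.2 = r.2 := by
  rcases hP.trap_or_inactive r hr with htrap | hinactive
  · nth_rw 1 [htrap]
    simp [expand, hP.lookup_eq r hr]
  · exact expand_eq_self hinactive

theorem Flat.expand_eq_of_rStep (hP : Flat P) (h : RStep P x y) : expand P x = expand P y := by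
  obtain ⟨r, hr, u, v, rfl, rfl⟩ := h
  have hlhs : expand P [Sum.inl r.1] = r.2 := by simp [expand, hP.lookup_eq r hr]
  rw [expand_append, expand_cons, hlhs, expand_append, expand_append, hP.expand_snd hr,
    List.append_assoc]

theorem Flat.expand_eq_of_stepsN (hP : Flat P) {m : ℕ} (h : StepsN P m x y) :
    expand P x = expand P y := by
  induction m generalizing x with
  | zero => exact congrArg (expand P) h
  | succ m ih =>
    obtain ⟨z, hstep, hsteps⟩ := h
    exact (hP.expand_eq_of_rStep hstep).trans (ih hsteps)

theorem CDGS.modeStep_of_expand_eq {G : CDGS T} {l : ℕ} (hP : P ∈ Set.range G.comp)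
    (hcount : activeCount P x ≤ l) (hexpand : expand P x = y) (hend : activeCount P y = 0) :
    G.ModeStep (.conj .t (.le l)) x y := by
  obtain ⟨i, rfl⟩ := hP
  exact ⟨i, _, hexpand ▸ stepsN_expand _ x, modeOK_t_iff.2 hend, hcount⟩

theorem CDGS.ModeStep.exists_expand_eq {G : CDGS T} {f : Mode}
    (hG : ∀ P ∈ Set.range G.comp, Flat P) (h : G.ModeStep (.conj .t f) x y) :
    ∃ P ∈ Set.range G.comp, expand P x = y ∧ activeCount P y = 0 := by
  obtain ⟨i, m, hsteps, ht, -⟩ := h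
  have hend := modeOK_t_iff.1 ht
  refine ⟨G.comp i, ⟨i, rfl⟩, ?_, hend⟩
  rw [(hG _ ⟨i, rfl⟩).expand_eq_of_stepsN hsteps, expand_eq_self hend]

end Expansion

/-! ### Components given by a partial function -/

section RuleList

variable {T : Type} {ν : Type*} [Encodable ν]

/-- The nonterminal symbol with name `X`; names are encoded as natural numbers. -/
def nt (X : ν) : Symb T := Sum.inl (Encodable.encode X)

/-- The component whose rules are `X → ρ X` for the names `X` in `V` with `ρ X` defined. -/
def ruleList (V : List ν) (ρ : ν → Option (SForm T)) : List (Rule T) :=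
  V.filterMap fun X => (ρ X).map (Prod.mk (Encodable.encode X))

theorem mem_ruleList {V : List ν} {ρ : ν → Option (SForm T)} {r : Rule T} :
    r ∈ ruleList V ρ ↔ ∃ X ∈ V, ρ X = some r.2 ∧ r.1 = Encodable.encode X := by
  rcases r with ⟨A, z⟩
  simp only [ruleList, List.mem_filterMap, Option.map_eq_some_iff, Prod.mk.injEq]
  grind

theorem lookup_ruleList {V : List ν} {X : ν} (hX : X ∈ V) (ρ : ν → Option (SForm T)) :
    (ruleList V ρ).lookup (Encodable.encode X) = ρ X := by
  cases h : ρ X with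
  | none =>
    refine List.lookup_eq_none_iff.2 fun r hr => ?_
    obtain ⟨Y, -, hY, hA⟩ := mem_ruleList.1 hr
    rw [bne_iff_ne, hA, ne_eq, Encodable.encode_inj]
    rintro rfl
    simp [h] at hY
  | some z =>
    have hmem : (Encodable.encode X, z) ∈ ruleList V ρ := mem_ruleList.2 ⟨X, hX, h, rfl⟩
    obtain ⟨z', hz'⟩ : ∃ z', (ruleList V ρ).lookup (Encodable.encode X) = some z' := by
      refine Option.ne_none_iff_exists'.1 fun hnone => ?_
      simpa using List.lookup_eq_none_iff.1 hnone _ hmem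
    obtain ⟨Y, -, hY, hA⟩ := mem_ruleList.1 (mem_of_lookup_eq_some hz')
    obtain rfl := Encodable.encode_injective hA
    rw [hz', ← hY, h]

theorem expand_nt {V : List ν} {X : ν} (hX : X ∈ V) (ρ : ν → Option (SForm T)) :
    expand (ruleList V ρ) [nt X] = (ρ X).getD [nt X] := by
  simp [expand, nt, lookup_ruleList hX]

theorem activeCount_nt {V : List ν} {X : ν} (hX : X ∈ V) (ρ : ν → Option (SForm T)) :
    activeCount (ruleList V ρ) [nt X] = if (ρ X).isSome then 1 else 0 := by
  simp [activeCount, nt, lookup_ruleList hX, List.countP_singleton]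

theorem activeCount_expand_ne_zero_of_trap {V : List ν} {ρ : ν → Option (SForm T)} {X : ν}
    (hX : X ∈ V) (htrap : ρ X = some [nt X]) {x : SForm T} (hx : nt X ∈ x) :
    activeCount (ruleList V ρ) (expand (ruleList V ρ) x) ≠ 0 := fun h => by
  have hmem : nt X ∈ expand (ruleList V ρ) x :=
    List.mem_flatMap.2 ⟨nt X, hx, by simp [nt, lookup_ruleList hX, htrap]⟩
  have hnone := activeCount_eq_zero_iff.1 h _ hmem
  rw [lookup_ruleList hX, htrap] at hnone
  cases hnone

theorem flat_ruleList {V : List ν} {ρ : ν → Option (SForm T)}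
    (h : ∀ X ∈ V, ∀ z, ρ X = some z → z = [nt X] ∨ activeCount (ruleList V ρ) z = 0) :
    Flat (ruleList V ρ) where
  lookup_eq r hr := by
    obtain ⟨X, hX, hz, hA⟩ := mem_ruleList.1 hr
    rw [hA, lookup_ruleList hX, hz]
  trap_or_inactive r hr := by
    obtain ⟨X, hX, hz, hA⟩ := mem_ruleList.1 hr
    rw [hA]
    exact h X hX r.2 hz

end RuleList

/-! ### The grammar system -/

section Construction

open Relation

/-- The letter `a` as a symbol of sentential forms. -/
abbrev letA : Symb ℕ := Sum.inr 0

/-- The letter `b` as a symbol of sentential forms. -/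
abbrev letB : Symb ℕ := Sum.inr 1

/-- Names of the nonterminals: the start symbol, the control symbols `cycle s` of the growth phase
and `finish m` of the finishing phase, and the block symbols `plain j` and `marked j` of group
`j`. -/
inductive NT where
  | start
  | cycle (s : ℕ)
  | finish (m : ℕ)
  | plain (j : ℕ)
  | marked (j : ℕ)
  deriving Encodable

/-- The names that occur in the grammar system with `2 * n + 1` components. -/
def nonterminals (n : ℕ) : List NT :=
  .start :: (List.range (2 * n)).map .cycle ++ (List.range (n + 1)).map .finish ++
    (List.range n).map .plain ++ (List.range n).map .marked

/-- The block `aʰ z aʰ b`. -/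
def bracket (h : ℕ) (z : SForm ℕ) : SForm ℕ :=
  List.replicate h letA ++ z ++ List.replicate h letA ++ [letB]

/-- The sentential form with control symbol `c` followed by `n` groups of blocks, group `j`
consisting of `k` copies of `g j`. -/
def blockForm (n k : ℕ) (c : Symb ℕ) (g : ℕ → SForm ℕ) : SForm ℕ :=
  c :: ((List.range n).flatMap fun j => List.replicate k (g j)).flatten

/-- The blocks of group `j` after `s` steps of the `(h + 1)`-st growth cycle: step `j` marks the
group and step `n + j` unmarks it while adding a letter `a` on both sides. -/
def growthBlock (n s h j : ℕ) : SForm ℕ :=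
  if s ≤ j then bracket h [nt (NT.plain j)]
  else if s ≤ j + n then bracket h [nt (NT.marked j)]
  else bracket (h + 1) [nt (NT.plain j)]

/-- The sentential form after `s` steps of the `(h + 1)`-st growth cycle. The control symbol is
taken modulo `2 * n`, so that `s = 2 * n` is the beginning of the next cycle. -/
def growthForm (n k s h : ℕ) : SForm ℕ :=
  blockForm n k (nt (NT.cycle (s % (2 * n)))) (growthBlock n s h)

/-- The blocks of group `j` in the finishing phase when the groups before `r` are terminal and those
from `r` up to `m` are marked. -/
def finishBlock (r m h j : ℕ) : SForm ℕ :=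
  bracket h (if j < r then [letA, letB, letA] else if j < m then [nt (NT.marked j)]
    else [nt (NT.plain j)])

/-- The sentential form of the finishing phase when the groups before `r` are terminal and those
from `r` up to `m` are marked. -/
def finishForm (n k r m h : ℕ) : SForm ℕ :=
  blockForm n k (nt (NT.finish m)) (finishBlock r m h)

/-- The rule of worker `c` for each nonterminal. Of the control symbols, only the ones it receives
and the ones it hands on are not traps. -/
def workerRule (n k c : ℕ) : NT → Option (SForm ℕ)
  | .start => if c + 1 = 2 * n then some (growthForm n k 0 0) else none
  | .cycle s =>
    if s = c then some [nt (NT.cycle ((c + 1) % (2 * n)))]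
    else if s = (c + 1) % (2 * n) then none
    else some [nt (NT.cycle s)]
  | .finish m =>
    if m = c ∧ m < n then some [nt (NT.finish (c + 1))]
    else if m = c + 1 then none
    else some [nt (NT.finish m)]
  | .plain j => if j = c then some [nt (NT.marked j)] else none
  | .marked j => if n + j = c then some [letA, nt (NT.plain j), letA] else none

/-- The rule of the terminator for each nonterminal. It starts the finishing phase, in which it
turns marked groups into terminal ones. -/
def terminatorRule (n : ℕ) : NT → Option (SForm ℕ)
  | .start => none
  | .cycle s => if s = 0 then some [nt (NT.finish 0)] else some [nt (NT.cycle s)]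
  | .finish m => if m = n then some [letB] else none
  | .plain _ => none
  | .marked _ => some [letA, letB, letA]

/-- Worker `c` of the grammar system, for `c < 2 * n`. -/
def worker (n k c : ℕ) : List (Rule ℕ) := ruleList (nonterminals n) (workerRule n k c)

/-- The last component of the grammar system. -/
def terminator (n : ℕ) : List (Rule ℕ) := ruleList (nonterminals n) (terminatorRule n)

/-- The grammar system for `S_{n·k}`: the `2 * n` workers and the terminator. -/
def sepSystem (n k : ℕ) : CDGS ℕ where
  deg := 2 * n + 1
  start := Encodable.encode NT.start
  comp i := if i.1 < 2 * n then worker n k i else terminator n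

variable {n k s h m r c j : ℕ} {P : List (Rule ℕ)}

@[simp] theorem start_mem_nonterminals : NT.start ∈ nonterminals n := by simp [nonterminals]

@[simp] theorem cycle_mem_nonterminals : NT.cycle s ∈ nonterminals n ↔ s < 2 * n := by
  simp [nonterminals]

@[simp] theorem finish_mem_nonterminals : NT.finish m ∈ nonterminals n ↔ m ≤ n := by
  simp [nonterminals]

@[simp] theorem plain_mem_nonterminals : NT.plain j ∈ nonterminals n ↔ j < n := by
  simp [nonterminals]

@[simp] theorem marked_mem_nonterminals : NT.marked j ∈ nonterminals n ↔ j < n := by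
  simp [nonterminals]

theorem bracket_cons_append (h : ℕ) (z : SForm ℕ) :
    bracket h (letA :: z ++ [letA]) = bracket (h + 1) z := by
  rw [bracket, bracket, List.replicate_succ' (n := h)]
  simp [← List.replicate_succ, List.replicate_succ']

theorem activeCount_replicate_inr (P : List (Rule ℕ)) (h a : ℕ) :
    activeCount P (List.replicate h (Sum.inr a)) = 0 := by
  simpa using activeCount_map_inr P (List.replicate h a)

theorem expand_bracket (P : List (Rule ℕ)) (h : ℕ) (z : SForm ℕ) :
    expand P (bracket h z) = bracket h (expand P z) := by
  have hb : expand P [letB] = [letB] := rfl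
  simp only [bracket, expand_append, expand_eq_self (activeCount_replicate_inr P h 0), hb]

theorem activeCount_bracket (P : List (Rule ℕ)) (h : ℕ) (z : SForm ℕ) :
    activeCount P (bracket h z) = activeCount P z := by
  have hb : activeCount P [letB] = 0 := rfl
  simp only [bracket, activeCount_append, activeCount_replicate_inr, hb, zero_add, add_zero]

theorem blockForm_congr {d : Symb ℕ} {g g' : ℕ → SForm ℕ} (hg : ∀ j < n, g j = g' j) :
    blockForm n k d g = blockForm n k d g' := by
  rw [blockForm, blockForm, List.flatMap_congr]
  intro j hj
  rw [hg j (List.mem_range.1 hj)]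

theorem expand_blockForm {d d' : Symb ℕ} {g g' : ℕ → SForm ℕ} (hd : expand P [d] = [d'])
    (hg : ∀ j < n, expand P (g j) = g' j) :
    expand P (blockForm n k d g) = blockForm n k d' g' := by
  rw [← blockForm_congr hg, blockForm, expand_cons, hd, expand_flatten, List.map_flatMap]
  simp only [List.map_replicate, blockForm, List.singleton_append]

theorem activeCount_blockForm (P : List (Rule ℕ)) (n k : ℕ) (d : Symb ℕ) (g : ℕ → SForm ℕ) :
    activeCount P (blockForm n k d g) =
      activeCount P [d] + ∑ j ∈ Finset.range n, k * activeCount P (g j) := by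
  rw [blockForm, activeCount_cons, activeCount_flatten, List.map_flatMap, List.flatMap,
    List.sum_flatten]
  simp only [List.map_replicate, List.map_map, Function.comp_def, List.sum_replicate, smul_eq_mul]
  rfl

theorem activeCount_blockForm_eq_zero {d : Symb ℕ} {g : ℕ → SForm ℕ} (hd : activeCount P [d] = 0)
    (hg : ∀ j < n, activeCount P (g j) = 0) : activeCount P (blockForm n k d g) = 0 := by
  rw [activeCount_blockForm, hd, Nat.zero_add]
  exact Finset.sum_eq_zero fun j hj => by simp [hg j (Finset.mem_range.1 hj)]

theorem activeCount_blockForm_le {d : Symb ℕ} {g : ℕ → SForm ℕ} (j₀ : ℕ)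
    (hg : ∀ j < n, activeCount P (g j) ≤ if j = j₀ then 1 else 0) :
    activeCount P (blockForm n k d g) ≤ k + 1 := by
  have hsum : ∑ j ∈ Finset.range n, k * activeCount P (g j) ≤ k :=
    calc
      _ ≤ ∑ j ∈ Finset.range n, if j = j₀ then k else 0 := Finset.sum_le_sum fun j hj => by
        simpa using Nat.mul_le_mul_left k (hg j (Finset.mem_range.1 hj))
      _ ≤ k := by rw [Finset.sum_ite_eq']; split_ifs <;> simp
  have hcontrol := activeCount_singleton_le_one P d
  rw [activeCount_blockForm]
  omega

theorem growthForm_two_mul (hn : 1 ≤ n) (k h : ℕ) :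
    growthForm n k (2 * n) h = growthForm n k 0 (h + 1) := by
  rw [growthForm, growthForm, Nat.mod_self, Nat.zero_mod]
  refine blockForm_congr fun j hj => ?_
  simp only [growthBlock]
  grind

theorem blockForm_finishBlock (n k h : ℕ) :
    blockForm n k letB (finishBlock n n h) = (sepWord (n * k) (h + 1)).map Sum.inr := by
  let unit := List.replicate (h + 1) 0 ++ [1]
  have hblock : ∀ j < n,
      finishBlock n n h j = (List.replicate 2 unit).flatten.map Sum.inr := fun j hj => by
    rw [finishBlock, if_pos hj]
    exact (bracket_cons_append h [letB]).trans (by simp [bracket, unit])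
  have hword : (List.replicate (2 * (n * k)) unit).flatten =
      (List.replicate (n * k) (List.replicate 2 unit).flatten).flatten := by
    rw [mul_comm, ← List.flatten_replicate_replicate, List.flatten_flatten, List.map_replicate]
  have hconst (z : SForm ℕ) :
      ((List.range n).flatMap fun _ => List.replicate k z) = List.replicate (n * k) z := by
    rw [List.flatMap, List.map_const', List.length_range, List.flatten_replicate_replicate]
  rw [blockForm_congr hblock, blockForm, hconst, ← List.map_replicate, ← List.map_flatten, ← hword]
  rfl

/-! ### The action of the components -/

theorem expand_worker_plain (hj : j < n) : expand (worker n k c) [nt (NT.plain j)] =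
    if j = c then [nt (NT.marked j)] else [nt (NT.plain j)] := by
  rw [worker, expand_nt (plain_mem_nonterminals.2 hj), workerRule]
  split_ifs <;> rfl

theorem expand_worker_marked (hj : j < n) : expand (worker n k c) [nt (NT.marked j)] =
    if n + j = c then [letA, nt (NT.plain j), letA] else [nt (NT.marked j)] := by
  rw [worker, expand_nt (marked_mem_nonterminals.2 hj), workerRule]
  split_ifs <;> rfl

theorem activeCount_worker_plain (hj : j < n) :
    activeCount (worker n k c) [nt (NT.plain j)] = if j = c then 1 else 0 := by
  rw [worker, activeCount_nt (plain_mem_nonterminals.2 hj), workerRule]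
  split_ifs <;> simp_all

theorem activeCount_worker_marked (hj : j < n) :
    activeCount (worker n k c) [nt (NT.marked j)] = if n + j = c then 1 else 0 := by
  rw [worker, activeCount_nt (marked_mem_nonterminals.2 hj), workerRule]
  split_ifs <;> simp_all

theorem expand_terminator_plain (hj : j < n) :
    expand (terminator n) [nt (NT.plain j)] = [nt (NT.plain j)] :=
  expand_nt (plain_mem_nonterminals.2 hj) _

theorem expand_terminator_marked (hj : j < n) :
    expand (terminator n) [nt (NT.marked j)] = [letA, letB, letA] :=
  expand_nt (marked_mem_nonterminals.2 hj) _

theorem activeCount_terminator_plain (hj : j < n) :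
    activeCount (terminator n) [nt (NT.plain j)] = 0 :=
  activeCount_nt (plain_mem_nonterminals.2 hj) _

theorem activeCount_terminator_marked (hj : j < n) :
    activeCount (terminator n) [nt (NT.marked j)] = 1 :=
  activeCount_nt (marked_mem_nonterminals.2 hj) _

theorem expand_letA_letB_letA (P : List (Rule ℕ)) :
    expand P [letA, letB, letA] = [letA, letB, letA] := rfl

theorem activeCount_letA_letB_letA (P : List (Rule ℕ)) :
    activeCount P [letA, letB, letA] = 0 := rfl

theorem expand_worker_growthBlock (hj : j < n) :
    expand (worker n k s) (growthBlock n s h j) = growthBlock n (s + 1) h j := by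
  have hgrow := bracket_cons_append h [nt (NT.plain j)]
  simp only [growthBlock, apply_ite (expand _), expand_bracket, expand_worker_plain hj,
    expand_worker_marked hj]
  grind

theorem activeCount_worker_growthBlock (hs : s < 2 * n) (hj : j < n) :
    activeCount (worker n k s) (growthBlock n s h j) = if j = s ∨ n + j = s then 1 else 0 := by
  simp only [growthBlock, apply_ite (activeCount _), activeCount_bracket,
    activeCount_worker_plain hj, activeCount_worker_marked hj]
  grind

theorem activeCount_worker_growthBlock_eq_zero (hj : j < n)
    (hs : s = c + 1 ∨ s = 0 ∧ c + 1 = 2 * n) :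
    activeCount (worker n k c) (growthBlock n s h j) = 0 := by
  simp only [growthBlock, apply_ite (activeCount _), activeCount_bracket,
    activeCount_worker_plain hj, activeCount_worker_marked hj]
  grind

theorem expand_worker_finishBlock (hm : m < n) (hj : j < n) :
    expand (worker n k m) (finishBlock r m h j) = finishBlock r (m + 1) h j := by
  simp only [finishBlock, expand_bracket, apply_ite (expand _), expand_letA_letB_letA,
    expand_worker_plain hj, expand_worker_marked hj]
  grind

theorem activeCount_worker_finishBlock (hr : r ≤ m) (hm : m < n) (hj : j < n) :
    activeCount (worker n k m) (finishBlock r m h j) = if j = m then 1 else 0 := by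
  simp only [finishBlock, activeCount_bracket, apply_ite (activeCount _),
    activeCount_letA_letB_letA, activeCount_worker_plain hj, activeCount_worker_marked hj]
  grind

theorem activeCount_worker_finishBlock_eq_zero (hc : c < n) (hj : j < n) :
    activeCount (worker n k c) (finishBlock r (c + 1) h j) = 0 := by
  simp only [finishBlock, activeCount_bracket, apply_ite (activeCount _),
    activeCount_letA_letB_letA, activeCount_worker_plain hj, activeCount_worker_marked hj]
  grind

theorem expand_terminator_growthBlock (hj : j < n) :
    expand (terminator n) (growthBlock n 0 h j) = finishBlock 0 0 h j := by
  simp [growthBlock, finishBlock, expand_bracket, expand_terminator_plain hj]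

theorem expand_terminator_finishBlock (hr : r ≤ m) (hj : j < n) :
    expand (terminator n) (finishBlock r m h j) = finishBlock m m h j := by
  simp only [finishBlock, expand_bracket, apply_ite (expand _), expand_letA_letB_letA,
    expand_terminator_plain hj, expand_terminator_marked hj]
  grind

theorem activeCount_terminator_finishBlock (hj : j < n) :
    activeCount (terminator n) (finishBlock r m h j) = if r ≤ j ∧ j < m then 1 else 0 := by
  simp only [finishBlock, activeCount_bracket, apply_ite (activeCount _),
    activeCount_letA_letB_letA, activeCount_terminator_plain hj, activeCount_terminator_marked hj]
  grind

theorem workerRule_cycle_add_one_mod (hc : c < 2 * n) :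
    workerRule n k c (.cycle ((c + 1) % (2 * n))) = none := by
  have hne : (c + 1) % (2 * n) ≠ c := by
    rw [add_one_mod_eq_ite hc]
    split_ifs <;> omega
  rw [workerRule, if_neg hne, if_pos rfl]

theorem expand_worker_growthForm (hs : s < 2 * n) :
    expand (worker n k s) (growthForm n k s h) = growthForm n k (s + 1) h := by
  refine expand_blockForm ?_ fun _ hj => expand_worker_growthBlock hj
  rw [Nat.mod_eq_of_lt hs, worker, expand_nt (cycle_mem_nonterminals.2 hs), workerRule, if_pos rfl]
  rfl

theorem activeCount_worker_growthForm_le (hs : s < 2 * n) :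
    activeCount (worker n k s) (growthForm n k s h) ≤ k + 1 := by
  refine activeCount_blockForm_le (if s < n then s else s - n) fun j hj => ?_
  rw [activeCount_worker_growthBlock hs hj]
  split_ifs <;> omega

theorem activeCount_worker_growthForm_eq_zero (hc : c < 2 * n)
    (hs : s = c + 1 ∨ s = 0 ∧ c + 1 = 2 * n) :
    activeCount (worker n k c) (growthForm n k s h) = 0 := by
  refine activeCount_blockForm_eq_zero ?_
    fun j hj => activeCount_worker_growthBlock_eq_zero hj hs
  have hmod : s % (2 * n) = (c + 1) % (2 * n) := by
    rcases hs with rfl | ⟨rfl, hc'⟩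
    · rfl
    · rw [hc', Nat.mod_self, Nat.zero_mod]
  rw [hmod, worker, activeCount_nt (by simpa using Nat.mod_lt _ (by omega)),
    workerRule_cycle_add_one_mod hc]
  rfl

theorem expand_worker_finishForm (hm : m < n) :
    expand (worker n k m) (finishForm n k r m h) = finishForm n k r (m + 1) h := by
  refine expand_blockForm ?_ fun _ hj => expand_worker_finishBlock hm hj
  rw [worker, expand_nt (finish_mem_nonterminals.2 hm.le), workerRule, if_pos ⟨rfl, hm⟩]
  rfl

theorem activeCount_worker_finishForm_le (hr : r ≤ m) (hm : m < n) :
    activeCount (worker n k m) (finishForm n k r m h) ≤ k + 1 :=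
  activeCount_blockForm_le m fun _ hj => (activeCount_worker_finishBlock hr hm hj).le

theorem activeCount_worker_finishForm_eq_zero (hc : c < n) :
    activeCount (worker n k c) (finishForm n k r (c + 1) h) = 0 := by
  refine activeCount_blockForm_eq_zero ?_
    fun _ hj => activeCount_worker_finishBlock_eq_zero hc hj
  rw [worker, activeCount_nt (by simpa using hc), workerRule]
  simp

theorem expand_terminator_growthForm (hn : 1 ≤ n) :
    expand (terminator n) (growthForm n k 0 h) = finishForm n k 0 0 h := by
  refine expand_blockForm ?_ fun _ hj => expand_terminator_growthBlock hj
  rw [Nat.zero_mod, terminator, expand_nt (cycle_mem_nonterminals.2 (by omega))]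
  rfl

theorem expand_terminator_finishForm_of_lt (hr : r ≤ m) (hm : m < n) :
    expand (terminator n) (finishForm n k r m h) = finishForm n k m m h := by
  refine expand_blockForm ?_ fun _ hj => expand_terminator_finishBlock hr hj
  rw [terminator, expand_nt (finish_mem_nonterminals.2 hm.le), terminatorRule, if_neg hm.ne]
  rfl

theorem expand_terminator_finishForm (hr : r ≤ n) :
    expand (terminator n) (finishForm n k r n h) = (sepWord (n * k) (h + 1)).map Sum.inr := by
  rw [← blockForm_finishBlock]
  refine expand_blockForm ?_ fun _ hj => expand_terminator_finishBlock hr hj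
  rw [terminator, expand_nt (finish_mem_nonterminals.2 le_rfl), terminatorRule, if_pos rfl]
  rfl

theorem activeCount_terminator_finishForm_le (hr : m ≤ r + 1) :
    activeCount (terminator n) (finishForm n k r m h) ≤ k + 1 :=
  activeCount_blockForm_le r fun j hj => by
    rw [activeCount_terminator_finishBlock hj]
    split_ifs <;> omega

theorem activeCount_terminator_finishForm_self (hm : m < n) :
    activeCount (terminator n) (finishForm n k m m h) = 0 := by
  refine activeCount_blockForm_eq_zero ?_ fun j hj => ?_
  · rw [terminator, activeCount_nt (finish_mem_nonterminals.2 hm.le), terminatorRule,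
      if_neg (c := m = n) hm.ne]
    rfl
  · rw [activeCount_terminator_finishBlock hj, if_neg (by omega)]

/-! ### The generated language -/

theorem flat_worker (hn : 1 ≤ n) (hc : c < 2 * n) : Flat (worker n k c) := by
  refine flat_ruleList fun X hX z hz => ?_
  change z = [nt X] ∨ activeCount (worker n k c) z = 0
  cases X with
  | start =>
    obtain ⟨hlast, rfl⟩ : c + 1 = 2 * n ∧ growthForm n k 0 0 = z := by simpa [workerRule] using hz
    exact .inr (activeCount_worker_growthForm_eq_zero hc (.inr ⟨rfl, hlast⟩))
  | cycle s =>
    rw [workerRule] at hz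
    split_ifs at hz <;> obtain rfl := Option.some_inj.1 hz
    · right
      rw [worker, activeCount_nt (by simpa using Nat.mod_lt _ (by omega)),
        workerRule_cycle_add_one_mod hc]
      rfl
    · exact .inl rfl
  | finish m =>
    rw [workerRule] at hz
    split_ifs at hz with hm <;> obtain rfl := Option.some_inj.1 hz
    · right
      rw [worker, activeCount_nt (by simpa using by omega), workerRule]
      simp
    · exact .inl rfl
  | plain j =>
    obtain ⟨rfl, rfl⟩ : j = c ∧ [nt (NT.marked j)] = z := by simpa [workerRule] using hz
    exact .inr ((activeCount_worker_marked (by simpa using hX)).trans (if_neg (by omega)))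
  | marked j =>
    obtain ⟨rfl, rfl⟩ : n + j = c ∧ [letA, nt (NT.plain j), letA] = z := by
      simpa [workerRule] using hz
    right
    change activeCount _ ([letA] ++ [nt (NT.plain j)] ++ [letA]) = 0
    rw [activeCount_append, activeCount_append, activeCount_worker_plain (by simpa using hX),
      if_neg (by omega)]
    rfl

theorem flat_terminator (hn : 1 ≤ n) : Flat (terminator n) := by
  refine flat_ruleList fun X hX z hz => ?_
  change z = [nt X] ∨ activeCount (terminator n) z = 0
  cases X with
  | cycle s =>
    rw [terminatorRule] at hz
    split_ifs at hz <;> obtain rfl := Option.some_inj.1 hz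
    · right
      rw [terminator, activeCount_nt (by simp), terminatorRule, if_neg (c := 0 = n) (by omega)]
      rfl
    · exact .inl rfl
  | finish m =>
    obtain ⟨-, rfl⟩ : m = n ∧ [letB] = z := by simpa [terminatorRule] using hz
    exact .inr rfl
  | marked j =>
    obtain rfl := Option.some_inj.1 hz
    exact .inr rfl
  | start | plain j => cases hz

/-- The sentential forms reachable in `t`-mode, by phase. -/
inductive Config (n k : ℕ) : SForm ℕ → Prop
  | start : Config n k [nt NT.start]
  | growth {s h : ℕ} (hs : s < 2 * n) : Config n k (growthForm n k s h)
  | finish {r m h : ℕ} (hr : r ≤ m) (hm : m ≤ n) : Config n k (finishForm n k r m h)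
  | done (h : ℕ) : Config n k ((sepWord (n * k) (h + 1)).map Sum.inr)

variable {x : SForm ℕ}

theorem Config.growthForm_succ (hs : s < 2 * n) : Config n k (growthForm n k (s + 1) h) := by
  rcases (show s + 1 ≤ 2 * n from hs).lt_or_eq with hlt | heq
  · exact .growth hlt
  · rw [heq, growthForm_two_mul (by omega)]
    exact .growth (by omega)

theorem Config.expand_worker (hc : c < 2 * n) (hx : Config n k x)
    (hend : activeCount (worker n k c) (expand (worker n k c) x) = 0) :
    Config n k (expand (worker n k c) x) := by
  cases hx with
  | start =>
    rw [worker, expand_nt start_mem_nonterminals, workerRule]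
    split_ifs
    · exact .growth (by omega)
    · exact .start
  | @growth s h hs =>
    by_cases hsc : s = c
    · rw [← hsc, expand_worker_growthForm hs]
      exact .growthForm_succ hs
    · by_cases hsc' : s = (c + 1) % (2 * n)
      · have hinactive : s = c + 1 ∨ s = 0 ∧ c + 1 = 2 * n := by
          rw [add_one_mod_eq_ite hc] at hsc'
          split_ifs at hsc' <;> omega
        rw [expand_eq_self (activeCount_worker_growthForm_eq_zero hc hinactive)]
        exact .growth hs
      · refine absurd hend (activeCount_expand_ne_zero_of_trap (cycle_mem_nonterminals.2 hs)
          ?_ (by simp [growthForm, blockForm, Nat.mod_eq_of_lt hs]))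
        rw [workerRule, if_neg hsc, if_neg hsc']
  | @finish r m h hr hm =>
    by_cases hmc : m = c ∧ m < n
    · obtain ⟨rfl, hlt⟩ := hmc
      rw [expand_worker_finishForm hlt]
      exact .finish (by omega) hlt
    · by_cases hmc' : m = c + 1
      · subst hmc'
        rw [expand_eq_self (activeCount_worker_finishForm_eq_zero hm)]
        exact .finish hr hm
      · refine absurd hend (activeCount_expand_ne_zero_of_trap (finish_mem_nonterminals.2 hm)
          ?_ (List.mem_cons_self ..))
        rw [workerRule, if_neg hmc, if_neg hmc']
  | done h =>
    rw [expand_map_inr]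
    exact .done h

theorem Config.expand_terminator (hx : Config n k x)
    (hend : activeCount (terminator n) (expand (terminator n) x) = 0) :
    Config n k (expand (terminator n) x) := by
  cases hx with
  | start =>
    rw [terminator, expand_nt start_mem_nonterminals]
    exact .start
  | @growth s h hs =>
    by_cases hs₀ : s = 0
    · subst hs₀
      rw [expand_terminator_growthForm (by omega)]
      exact .finish le_rfl (Nat.zero_le n)
    · refine absurd hend (activeCount_expand_ne_zero_of_trap (cycle_mem_nonterminals.2 hs)
        ?_ (by simp [growthForm, blockForm, Nat.mod_eq_of_lt hs]))
      rw [terminatorRule, if_neg hs₀]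
  | @finish r m h hr hm =>
    rcases hm.lt_or_eq with hlt | rfl
    · rw [expand_terminator_finishForm_of_lt hr hlt]
      exact .finish le_rfl hm
    · rw [expand_terminator_finishForm hr]
      exact .done h
  | done h =>
    rw [expand_map_inr]
    exact .done h

theorem mem_range_comp_sepSystem :
    P ∈ Set.range (sepSystem n k).comp ↔ (∃ c < 2 * n, P = worker n k c) ∨ P = terminator n := by
  constructor
  · rintro ⟨i, rfl⟩
    change (∃ c < 2 * n, (if i.1 < 2 * n then worker n k i else terminator n) = _) ∨ _ = _
    split_ifs with hi
    · exact .inl ⟨i, hi, rfl⟩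
    · exact .inr (if_neg hi)
  · rintro (⟨c, hc, rfl⟩ | rfl)
    · exact ⟨⟨c, Nat.lt_succ_of_lt hc⟩, if_pos hc⟩
    · exact ⟨⟨2 * n, Nat.lt_succ_self _⟩, if_neg (lt_irrefl _)⟩

theorem workerRule_ne_some_nil (n k c : ℕ) (X : NT) : workerRule n k c X ≠ some [] := by
  cases X <;> rw [workerRule] <;> split_ifs <;> simp [growthForm, blockForm]

theorem terminatorRule_ne_some_nil (n : ℕ) (X : NT) : terminatorRule n X ≠ some [] := by
  cases X <;> simp [terminatorRule, ite_eq_iff]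

theorem lamFree_sepSystem (n k : ℕ) : (sepSystem n k).LamFree := by
  intro i r hr hnil
  rcases mem_range_comp_sepSystem.1 ⟨i, rfl⟩ with ⟨c, -, hc⟩ | hc <;> rw [hc] at hr <;>
    obtain ⟨X, -, hX, -⟩ := mem_ruleList.1 hr <;> rw [hnil] at hX
  · exact workerRule_ne_some_nil n k c X hX
  · exact terminatorRule_ne_some_nil n X hX

theorem flat_of_mem_range_comp_sepSystem (hn : 1 ≤ n) (hP : P ∈ Set.range (sepSystem n k).comp) :
    Flat P := by
  rcases mem_range_comp_sepSystem.1 hP with ⟨c, hc, rfl⟩ | rfl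
  · exact flat_worker hn hc
  · exact flat_terminator hn

theorem Config.of_modeStep {f : Mode} {y : SForm ℕ} (hn : 1 ≤ n) (hx : Config n k x)
    (hxy : (sepSystem n k).ModeStep (.conj .t f) x y) : Config n k y := by
  obtain ⟨P, hP, rfl, hend⟩ :=
    hxy.exists_expand_eq fun _ => flat_of_mem_range_comp_sepSystem hn
  rcases mem_range_comp_sepSystem.1 hP with ⟨c, hc, rfl⟩ | rfl
  · exact hx.expand_worker hc hend
  · exact hx.expand_terminator hend

theorem Config.of_transGen {f : Mode} (hn : 1 ≤ n)
    (hx : TransGen ((sepSystem n k).ModeStep (.conj .t f)) [nt NT.start] x) :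
    Config n k x := by
  induction hx with
  | single h => exact Config.start.of_modeStep hn h
  | tail _ h ih => exact ih.of_modeStep hn h

theorem Config.mem_sepLang {w : List ℕ} (hw : Config n k (w.map Sum.inr)) :
    w ∈ sepLang (n * k) := by
  generalize hx : w.map Sum.inr = x at hw
  cases hw with
  | done h => exact ⟨h + 1, by omega, List.map_injective_iff.2 Sum.inr_injective hx⟩
  | start | growth | finish =>
    simp [growthForm, finishForm, blockForm, nt, List.map_eq_cons_iff] at hx

theorem lang_sepSystem_subset (hn : 1 ≤ n) (k : ℕ) (f : Mode) :
    (sepSystem n k).lang (.conj .t f) ⊆ sepLang (n * k) :=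
  fun _ hw => (Config.of_transGen hn hw).mem_sepLang

variable {l : ℕ}

theorem modeStep_start_s8 (hn : 1 ≤ n) (hl : 1 ≤ l) :
    (sepSystem n k).ModeStep (.conj .t (.le l)) [nt NT.start] (growthForm n k 0 0) := by
  have hlast : 2 * n - 1 + 1 = 2 * n := by omega
  refine CDGS.modeStep_of_expand_eq
    (mem_range_comp_sepSystem.2 (.inl ⟨2 * n - 1, by omega, rfl⟩))
    ((activeCount_singleton_le_one _ _).trans hl) ?_
    (activeCount_worker_growthForm_eq_zero (by omega) (.inr ⟨rfl, hlast⟩))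
  rw [worker, expand_nt start_mem_nonterminals, workerRule, if_pos hlast]
  rfl

theorem modeStep_growthForm_succ (hl : k + 1 ≤ l) (hs : s < 2 * n) :
    (sepSystem n k).ModeStep (.conj .t (.le l)) (growthForm n k s h) (growthForm n k (s + 1) h) :=
  CDGS.modeStep_of_expand_eq (mem_range_comp_sepSystem.2 (.inl ⟨s, hs, rfl⟩))
    ((activeCount_worker_growthForm_le hs).trans hl) (expand_worker_growthForm hs)
    (activeCount_worker_growthForm_eq_zero hs (.inl rfl))

theorem modeStep_finishForm_succ (hl : k + 1 ≤ l) (hr : r ≤ m) (hm : m < n) :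
    (sepSystem n k).ModeStep (.conj .t (.le l)) (finishForm n k r m h)
      (finishForm n k r (m + 1) h) :=
  CDGS.modeStep_of_expand_eq (mem_range_comp_sepSystem.2 (.inl ⟨m, by omega, rfl⟩))
    ((activeCount_worker_finishForm_le hr hm).trans hl) (expand_worker_finishForm hm)
    (activeCount_worker_finishForm_eq_zero hm)

theorem modeStep_terminator_growthForm (hn : 1 ≤ n) (hl : k + 1 ≤ l) :
    (sepSystem n k).ModeStep (.conj .t (.le l)) (growthForm n k 0 h) (finishForm n k 0 0 h) := by
  refine CDGS.modeStep_of_expand_eq (mem_range_comp_sepSystem.2 (.inr rfl)) ?_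
    (expand_terminator_growthForm hn) (activeCount_terminator_finishForm_self hn)
  refine (activeCount_blockForm_le 0 fun j hj => ?_).trans hl
  simp [growthBlock, activeCount_bracket, activeCount_terminator_plain hj]

theorem modeStep_terminator_finishForm (hl : k + 1 ≤ l) (hm : m + 1 < n) :
    (sepSystem n k).ModeStep (.conj .t (.le l)) (finishForm n k m (m + 1) h)
      (finishForm n k (m + 1) (m + 1) h) :=
  CDGS.modeStep_of_expand_eq (mem_range_comp_sepSystem.2 (.inr rfl))
    ((activeCount_terminator_finishForm_le le_rfl).trans hl)
    (expand_terminator_finishForm_of_lt (by omega) hm) (activeCount_terminator_finishForm_self hm)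

theorem modeStep_terminator_sepWord (hl : k + 1 ≤ l) (hm : m + 1 = n) :
    (sepSystem n k).ModeStep (.conj .t (.le l)) (finishForm n k m n h)
      ((sepWord (n * k) (h + 1)).map Sum.inr) :=
  CDGS.modeStep_of_expand_eq (mem_range_comp_sepSystem.2 (.inr rfl))
    ((activeCount_terminator_finishForm_le hm.ge).trans hl)
    (expand_terminator_finishForm (by omega)) (activeCount_map_inr _ _)

theorem transGen_growthForm (hn : 1 ≤ n) (hl : k + 1 ≤ l) (h : ℕ) :
    TransGen ((sepSystem n k).ModeStep (.conj .t (.le l))) [nt NT.start] (growthForm n k 0 h) := by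
  induction h with
  | zero => exact .single (modeStep_start_s8 hn (by omega))
  | succ h ih =>
    have hround : ∀ s ≤ 2 * n, TransGen ((sepSystem n k).ModeStep (.conj .t (.le l)))
        [nt NT.start] (growthForm n k s h) := by
      intro s hs
      induction s with
      | zero => exact ih
      | succ s ihs => exact (ihs (by omega)).tail (modeStep_growthForm_succ hl hs)
    rw [← growthForm_two_mul hn]
    exact hround _ le_rfl

theorem transGen_finishForm (hn : 1 ≤ n) (hl : k + 1 ≤ l) (h : ℕ) (hm : m < n) :
    TransGen ((sepSystem n k).ModeStep (.conj .t (.le l))) [nt NT.start]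
      (finishForm n k m (m + 1) h) := by
  refine TransGen.tail ?_ (modeStep_finishForm_succ hl le_rfl hm)
  induction m with
  | zero => exact (transGen_growthForm hn hl h).tail (modeStep_terminator_growthForm hn hl)
  | succ m ih =>
    exact ((ih (by omega)).tail (modeStep_finishForm_succ hl le_rfl (by omega))).tail
      (modeStep_terminator_finishForm hl hm)

theorem sepLang_subset_lang (hn : 1 ≤ n) (hl : k + 1 ≤ l) :
    sepLang (n * k) ⊆ (sepSystem n k).lang (.conj .t (.le l)) := by
  rintro _ ⟨i, hi, rfl⟩
  obtain ⟨h, rfl⟩ := Nat.exists_eq_add_of_le' hi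
  obtain ⟨m, rfl⟩ := Nat.exists_eq_add_of_le' hn
  exact (transGen_finishForm hn hl h (Nat.lt_succ_self m)).tail (modeStep_terminator_sepWord hl rfl)

end Construction

theorem stmt8_general (n k l : ℕ) (hn : 1 ≤ n) (hl : k + 1 ≤ l) :
    sepLang (n * k) ∈ CDFam ℕ true (2 * n + 1) (Mode.conj Mode.t (Mode.le l)) :=
  ⟨sepSystem n k, le_rfl, fun _ => lamFree_sepSystem n k,
    congrArg (· \ {[]}) ((lang_sepSystem_subset hn k _).antisymm (sepLang_subset_lang hn hl))⟩

/-- For all n, k ∈ ℕ (positive),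
S_{n·k} ∈ L(CD_{2n+1}, CF−λ, (t∧≤k+1)). -/
theorem stmt8 (n k : ℕ) (hn : 1 ≤ n) (hk : 1 ≤ k) :
    sepLang (n * k) ∈ CDFam ℕ true (2 * n + 1) (Mode.conj Mode.t (Mode.le (k + 1))) :=
  stmt8_general n k (k + 1) hn le_rfl

end CDHybrid
end
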